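/- arXiv:1803.10483 — 3 statements merged into one kernel-verified Lean document; each statement's English description precedes it below -/
import Mathlib

section
/- Let A and B be unital complex C*-algebras and T : A → B a continuous unital algebra homomorphism satisfying the Riesz property. If a ∈ A is a generalized T-Riesz element, with σ_T(a) = ω_T(a) = β_T(a) = Ω for some finite set Ω ⊆ ℂ, then a admits a decomposition a = d + c where T d = 0, d is normal (d* · d = d · d*), and σ_A(c) = Ω. -/
/-!
This is a form of West's decomposition of Riesz operators, with the Schur triangularisation carried
out by range projections.

*Isolated points.* For `z ∉ Ω` write `z - a = c + g` with `T c = 0`, `g` invertible and `c g = g c`.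
By the Riesz property, `-1` is not an accumulation point of the spectrum of `c g⁻¹`; splitting `A`
along the Riesz projection of `c g⁻¹` at `-1` shows that `z` is not an accumulation point of the
spectrum of `a` (`isolated_of_browder`). By compactness `σ(a) \ Ω` is countable and accumulates only
at `Ω`: it is listed by a sequence `l k` with `l k - o k → 0` for some `o k ∈ Ω`
(`exists_enumeration`). The Riesz projection `p k` of `a` at `l k ∉ Ω = σ(T a)` is in the kernel of
`T` (`map_rieszProj_eq_zero`).

*The normal part.* Let `P n` be the supremum of the commuting idempotents `p k`, `k < n`, and `Q n`
the orthogonal projection onto the range of `P n` (`exists_rangeProj`), which is in `ker T` as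
well. The `Q n` increase, and their ranges are invariant under `a`, so `a` is block upper triangular
with respect to the orthogonal projections `Q (k + 1) - Q k`, with quasinilpotent perturbation of
`l k` as `k`-th diagonal block. Put `D n = ∑_{k < n} (l k - o k) (Q (k + 1) - Q k)`. Since
`l k - o k → 0` and the projections are orthogonal, `D n` converges in norm to a normal `d` with
`T d = 0` (`normal_and_norm_le_of_proj`).

*The spectrum of `c = a - d`.* As `T c = T a`, it contains `Ω`. Let `z ∉ Ω`. A block triangular
element is invertible as soon as its diagonal blocks are (`IsFlag.isUnit_sub_sum`). Hence
`G = a - z - D n₀` is invertible for `n₀` large, and `c - z = G (1 - x)` with `x = G⁻¹ (d - D n₀)` in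
`ker T`. By the Riesz property a small circle around `1` avoids `σ(x)`. The same triangularity
argument shows that the whole closed disc avoids the spectrum of the approximants
`G⁻¹ (D n - D n₀)`, and the maximum modulus principle for their resolvents gives `1 ∉ σ(x)`
(`one_notMem_spectrum_of_approx`).
-/

/-! ### Riesz projections -/

theorem clm_circleIntegral {E F : Type*} [NormedAddCommGroup E] [NormedSpace ℂ E] [CompleteSpace E]
    [NormedAddCommGroup F] [NormedSpace ℂ F] [CompleteSpace F] (L : E →L[ℂ] F) {f : ℂ → E}
    {c : ℂ} {R : ℝ} (hf : CircleIntegrable f c R) :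
    L (∮ z in C(c, R), f z) = ∮ z in C(c, R), L (f z) := by
  simp only [circleIntegral]
  rw [← ContinuousLinearMap.intervalIntegral_comp_comm L hf.out]
  simp

section RieszProjection
variable {A : Type*} [NormedRing A] [NormedAlgebra ℂ A] [CompleteSpace A]

/-- The Cauchy integral `(2πi)⁻¹ ∮ (z - w)⁻¹ (z - a)⁻¹ dz` of the resolvent of `a`
over the circle of centre `μ` and radius `r`. -/
noncomputable def resCauchy (a : A) (μ : ℂ) (r : ℝ) (w : ℂ) : A :=
  (2 * Real.pi * Complex.I : ℂ)⁻¹ • ∮ z in C(μ, r), (z - w)⁻¹ • resolvent a z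

/-- The Riesz projection `(2πi)⁻¹ ∮ (z - a)⁻¹ dz` over the circle of centre `μ` and radius `r`. -/
noncomputable def rieszProj (a : A) (μ : ℂ) (r : ℝ) : A :=
  (2 * Real.pi * Complex.I : ℂ)⁻¹ • ∮ z in C(μ, r), resolvent a z

theorem continuousOn_resolvent (a : A) {s : Set ℂ} (hs : ∀ z ∈ s, z ∉ spectrum ℂ a) :
    ContinuousOn (resolvent a) s := fun z hz =>
  (spectrum.hasDerivAt_resolvent_const_left
    (show z ∈ resolventSet ℂ a from
      Set.notMem_compl_iff.1 (hs z hz))).continuousAt.continuousWithinAt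

theorem differentiableAt_resolvent (a : A) {z : ℂ} (hz : z ∉ spectrum ℂ a) :
    DifferentiableAt ℂ (resolvent a) z :=
  (spectrum.hasDerivAt_resolvent_const_left
    (show z ∈ resolventSet ℂ a from Set.notMem_compl_iff.1 hz)).differentiableAt

omit [CompleteSpace A] in
theorem sub_mul_resolvent (a : A) {z : ℂ} (hz : z ∉ spectrum ℂ a) :
    (algebraMap ℂ A z - a) * resolvent a z = 1 :=
  Ring.mul_inverse_cancel _ (Set.notMem_compl_iff.1 hz)

omit [CompleteSpace A] in
theorem resolvent_mul_sub (a : A) {z : ℂ} (hz : z ∉ spectrum ℂ a) :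
    resolvent a z * (algebraMap ℂ A z - a) = 1 :=
  Ring.inverse_mul_cancel _ (Set.notMem_compl_iff.1 hz)

omit [CompleteSpace A] in
theorem commute_resolvent {a y : A} (h : Commute y a) (z : ℂ) : Commute y (resolvent a z) := by
  unfold resolvent
  have h1 : Commute y (algebraMap ℂ A z - a) := Commute.sub_right (Algebra.commutes z y).symm h
  by_cases hu : IsUnit (algebraMap ℂ A z - a)
  · obtain ⟨u, hu⟩ := hu
    rw [← hu, Ring.inverse_unit]
    rw [← hu] at h1
    exact h1.units_inv_right
  · rw [Ring.inverse_non_unit _ hu]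
    exact Commute.zero_right _

theorem commute_circleIntegral {y : A} {f : ℂ → A} {c : ℂ} {R : ℝ} (hf : CircleIntegrable f c R)
    (h : ∀ z, Commute y (f z)) : Commute y (∮ z in C(c, R), f z) := by
  have h1 := clm_circleIntegral (ContinuousLinearMap.mul ℂ A y) hf
  have h2 := clm_circleIntegral ((ContinuousLinearMap.mul ℂ A).flip y) hf
  simp only [ContinuousLinearMap.mul_apply', ContinuousLinearMap.flip_apply] at h1 h2
  unfold Commute SemiconjBy
  rw [h1, h2]
  congr 1
  ext z
  exact h z

theorem circle_inv_continuousOn {μ w : ℂ} {r : ℝ} (hw : dist w μ ≠ r) :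
    ContinuousOn (fun z : ℂ => (z - w)⁻¹) (Metric.sphere μ r) := by
  refine (continuousOn_id.sub continuousOn_const).inv₀ fun z hz => ?_
  intro h
  have h' : z = w := sub_eq_zero.1 h
  exact hw (by rw [← h']; exact hz)

variable {a : A} {μ : ℂ} {r : ℝ}

theorem commute_rieszProj (hr : 0 < r) (hs : ∀ z ∈ Metric.sphere μ r, z ∉ spectrum ℂ a) {y : A}
    (h : Commute y a) : Commute y (rieszProj a μ r) :=
  (commute_circleIntegral ((continuousOn_resolvent a hs).circleIntegrable hr.le)
    (commute_resolvent h)).smul_right _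

theorem commute_resCauchy (hr : 0 < r) (hs : ∀ z ∈ Metric.sphere μ r, z ∉ spectrum ℂ a) {w : ℂ}
    (hw : dist w μ ≠ r) {y : A}
    (h : Commute y a) : Commute y (resCauchy a μ r w) :=
  (commute_circleIntegral (((circle_inv_continuousOn hw).smul
      (continuousOn_resolvent a hs)).circleIntegrable hr.le)
    (fun z => (commute_resolvent h z).smul_right _)).smul_right _

/-- Multiplying the Cauchy integral of the resolvent by `w - a`: the identity
`(z - w)⁻¹ (w - a) (z - a)⁻¹ = (z - w)⁻¹ - (z - a)⁻¹` integrated over the circle. -/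
theorem sub_mul_resCauchy (hr : 0 < r) (hs : ∀ z ∈ Metric.sphere μ r, z ∉ spectrum ℂ a) {w : ℂ}
    (hw : dist w μ ≠ r) :
    (algebraMap ℂ A w - a) * resCauchy a μ r w =
      ((2 * Real.pi * Complex.I : ℂ)⁻¹ * ∮ z in C(μ, r), (z - w)⁻¹) • (1 : A) - rieszProj a μ r := by
  have hc := continuousOn_resolvent a hs
  have hi := circle_inv_continuousOn hw
  have h1 := clm_circleIntegral (ContinuousLinearMap.mul ℂ A (algebraMap ℂ A w - a))
    (f := fun z => (z - w)⁻¹ • resolvent a z) ((hi.smul hc).circleIntegrable hr.le)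
  simp only [ContinuousLinearMap.mul_apply'] at h1
  rw [resCauchy, rieszProj, mul_smul_comm, h1, mul_smul, ← circleIntegral.integral_smul_const,
    ← smul_sub, ← circleIntegral.integral_sub (f := fun z => (z - w)⁻¹ • (1 : A))
      ((hi.smul continuousOn_const).circleIntegrable hr.le) (hc.circleIntegrable hr.le)]
  congr 1
  refine circleIntegral.integral_congr hr.le fun z hz => ?_
  have hz0 : z - w ≠ 0 := by
    intro h
    rw [sub_eq_zero] at h
    exact hw (by rw [← h]; exact hz)
  have e : algebraMap ℂ A w - a = (algebraMap ℂ A z - a) - (z - w) • (1 : A) := by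
    rw [Algebra.algebraMap_eq_smul_one, Algebra.algebraMap_eq_smul_one, sub_smul]; abel
  rw [mul_smul_comm, e, sub_mul, sub_mul_resolvent a (hs z hz), smul_sub, smul_mul_assoc, one_mul,
    smul_smul, inv_mul_cancel₀ hz0, one_smul]

theorem sub_mul_resCauchy_inside (hr : 0 < r) (hs : ∀ z ∈ Metric.sphere μ r, z ∉ spectrum ℂ a)
    {w : ℂ} (hw : dist w μ < r) :
    (algebraMap ℂ A w - a) * resCauchy a μ r w = 1 - rieszProj a μ r := by
  rw [sub_mul_resCauchy hr hs hw.ne, circleIntegral.integral_sub_inv_of_mem_ball hw,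
    inv_mul_cancel₀ Complex.two_pi_I_ne_zero, one_smul]

theorem sub_mul_resCauchy_outside (hr : 0 < r) (hs : ∀ z ∈ Metric.sphere μ r, z ∉ spectrum ℂ a)
    {w : ℂ} (hw : r < dist w μ) :
    (algebraMap ℂ A w - a) * resCauchy a μ r w = - rieszProj a μ r := by
  rw [sub_mul_resCauchy hr hs hw.ne',
    Complex.circleIntegral_eq_zero_of_differentiable_on_off_countable hr.le Set.countable_empty]
  · simp
  · refine (continuousOn_id.sub continuousOn_const).inv₀ fun z hz h => ?_
    rw [← show z = w from sub_eq_zero.1 h] at hw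
    exact absurd (Metric.mem_closedBall.1 hz) (not_le.2 hw)
  · intro z hz
    refine (differentiableAt_id.sub_const _).inv fun h => ?_
    rw [← show z = w from sub_eq_zero.1 h] at hw
    exact absurd (Metric.mem_ball.1 hz.1) (not_lt.2 hw.le)

/-- The Riesz projection does not depend on the radius, as long as the disc contains no point of
the spectrum except possibly its centre. -/
theorem rieszProj_eq {r' : ℝ} (hr : 0 < r) (hr' : r ≤ r')
    (h : ∀ s ∈ spectrum ℂ a, s ≠ μ → r' < dist s μ) : rieszProj a μ r' = rieszProj a μ r := by
  unfold rieszProj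
  have key : ∀ z : ℂ, r ≤ dist z μ → dist z μ ≤ r' → z ∉ spectrum ℂ a := by
    intro z h1 h2 hz
    refine absurd (h z hz ?_) (not_lt.2 h2)
    rintro rfl
    simp at h1
    linarith
  rw [Complex.circleIntegral_eq_of_differentiable_on_annulus_off_countable hr hr'
    Set.countable_empty (continuousOn_resolvent a fun z hz => key z ?_ hz.1)]
  · intro z hz
    exact differentiableAt_resolvent a (key z (le_of_lt (by simpa using hz.1.2)) (le_of_lt hz.1.1))
  · simpa using hz.2

omit [CompleteSpace A] in
theorem sphere_notMem {r' : ℝ} (hr : 0 < r) (hr' : r ≤ r')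
    (h : ∀ s ∈ spectrum ℂ a, s ≠ μ → r' < dist s μ) : ∀ z ∈ Metric.sphere μ r, z ∉ spectrum ℂ a := by
  intro z hz hs
  have hz' : dist z μ = r := hz
  refine absurd (h z hs ?_) (by linarith)
  rintro rfl
  simp at hz'
  linarith

/-- The Riesz projection is idempotent. On a circle of radius `r / 2` the function
`z ↦ (z - a)⁻¹ (1 - p)` agrees with the Cauchy integral over the circle of radius `r`, which is
holomorphic inside, so Cauchy's theorem gives `p (1 - p) = 0`. -/
theorem rieszProj_idem (hr : 0 < r) (h : ∀ s ∈ spectrum ℂ a, s ≠ μ → r < dist s μ) :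
    rieszProj a μ r * rieszProj a μ r = rieszProj a μ r := by
  have hs := sphere_notMem hr le_rfl h
  have hr2 : 0 < r / 2 := by positivity
  have hs2 := sphere_notMem hr2 (by linarith) h
  set p := rieszProj a μ r with hp
  have hpr : p = rieszProj a μ (r / 2) := rieszProj_eq hr2 (by linarith) h
  have key : rieszProj a μ (r / 2) * (1 - p) = 0 := by
    have hc := (continuousOn_resolvent a hs2).circleIntegrable hr2.le
    have h2 := clm_circleIntegral ((ContinuousLinearMap.mul ℂ A).flip (1 - p)) hc
    simp only [ContinuousLinearMap.mul_apply', ContinuousLinearMap.flip_apply] at h2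
    rw [rieszProj, smul_mul_assoc, h2]
    have h3 : (∮ z in C(μ, r / 2), resolvent a z * (1 - p)) =
        ∮ z in C(μ, r / 2), resCauchy a μ r z := by
      refine circleIntegral.integral_congr hr2.le fun z hz => ?_
      have hz' : dist z μ = r / 2 := hz
      rw [hp, ← sub_mul_resCauchy_inside hr hs (w := z) (by linarith), ← mul_assoc,
        resolvent_mul_sub a (hs2 z hz), one_mul]
    have h4 : DifferentiableOn ℂ (resCauchy a μ r) (Metric.ball μ r) := by
      have hi := (continuousOn_resolvent a hs).circleIntegrable hr.le
      obtain ⟨R, rfl⟩ : ∃ R : NNReal, (R : ℝ) = r := ⟨⟨r, hr.le⟩, rfl⟩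
      have := (hasFPowerSeriesOn_cauchy_integral hi (by exact_mod_cast hr)).differentiableOn
      rwa [Metric.eball_coe] at this
    have hsub : Metric.closedBall μ (r / 2) ⊆ Metric.ball μ r :=
      Metric.closedBall_subset_ball (by linarith)
    rw [h3, Complex.circleIntegral_eq_zero_of_differentiable_on_off_countable hr2.le
      Set.countable_empty (h4.continuousOn.mono hsub), smul_zero]
    intro z hz
    exact h4.differentiableAt (Metric.isOpen_ball.mem_nhds
      (hsub (Metric.ball_subset_closedBall hz.1)))
  rw [← hpr, mul_sub, mul_one, sub_eq_zero] at key
  exact key.symm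

/-- `T` maps the Riesz projection to the integral of the resolvent of `T a`, which is holomorphic
on the whole disc if `μ` is not in the spectrum of `T a`. -/
theorem map_rieszProj_eq_zero {B : Type*} [NormedRing B] [NormedAlgebra ℂ B] [CompleteSpace B]
    (T : A →ₐ[ℂ] B) (hT : Continuous T) (hr : 0 < r)
    (h : ∀ s ∈ spectrum ℂ a, s ≠ μ → r < dist s μ) (hμ : μ ∉ spectrum ℂ (T a)) :
    T (rieszProj a μ r) = 0 := by
  have hs := sphere_notMem hr le_rfl h
  have key : ∀ z ∈ Metric.closedBall μ r, z ∉ spectrum ℂ (T a) := by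
    intro z hz hzT
    by_cases hzμ : z = μ
    · exact hμ (hzμ ▸ hzT)
    · exact absurd (h z (AlgHom.spectrum_apply_subset T a hzT) hzμ) (not_lt.2 hz)
  let L : A →L[ℂ] B := ⟨T.toLinearMap, hT⟩
  have h1 := clm_circleIntegral L ((continuousOn_resolvent a hs).circleIntegrable hr.le)
  have h2 : (∮ z in C(μ, r), L (resolvent a z)) = ∮ z in C(μ, r), resolvent (T a) z := by
    refine circleIntegral.integral_congr hr.le fun z hz => ?_
    have e1 : T (resolvent a z) * (algebraMap ℂ B z - T a) = 1 := by
      rw [← AlgHom.commutes T z, ← map_sub, ← map_mul, resolvent_mul_sub a (hs z hz), map_one]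
    have e2 := sub_mul_resolvent (T a) (key z (Metric.sphere_subset_closedBall hz))
    exact left_inv_eq_right_inv e1 e2
  have h3 : T (rieszProj a μ r) =
      (2 * Real.pi * Complex.I : ℂ)⁻¹ • L (∮ z in C(μ, r), resolvent a z) := map_smul T _ _
  rw [h3, h1, h2, Complex.circleIntegral_eq_zero_of_differentiable_on_off_countable hr.le
      Set.countable_empty (continuousOn_resolvent _ key), smul_zero]
  intro z hz
  exact differentiableAt_resolvent _ (key z (Metric.ball_subset_closedBall hz.1))

/-- `x` lies in the double commutant of `a`. -/
def Bicommutes (a x : A) : Prop := ∀ y : A, Commute y a → Commute y x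

/-- Spectral idempotent of an isolated point `μ` of the spectrum: `a - w` is invertible relative to
`p` for all `w ≠ μ`, and `a - μ` is invertible relative to `1 - p`. -/
structure IsRiesz (a : A) (μ : ℂ) (p : A) : Prop where
  idem : p * p = p
  bic : Bicommutes a p
  inv_ne : ∀ w, w ≠ μ → ∃ u, Bicommutes a u ∧ (a - algebraMap ℂ A w) * u = p
  inv_eq : ∃ u, Bicommutes a u ∧ (a - algebraMap ℂ A μ) * u = 1 - p

theorem isRiesz_rieszProj (hr : 0 < r) (h : ∀ s ∈ spectrum ℂ a, s ≠ μ → r < dist s μ) :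
    IsRiesz a μ (rieszProj a μ r) where
  idem := rieszProj_idem hr h
  bic y hy := commute_rieszProj hr (sphere_notMem hr le_rfl h) hy
  inv_ne w hw := by
    have hd : 0 < dist w μ := dist_pos.2 hw
    set r' := min r (dist w μ / 2) with hr'
    have h0 : 0 < r' := by positivity
    have h1 : r' ≤ r := min_le_left _ _
    have h2 : r' < dist w μ := (min_le_right _ _).trans_lt (by linarith)
    have hs := sphere_notMem h0 h1 h
    refine ⟨resCauchy a μ r' w, fun y hy => commute_resCauchy h0 hs h2.ne' hy, ?_⟩
    rw [rieszProj_eq h0 h1 h, ← neg_sub, neg_mul, sub_mul_resCauchy_outside h0 hs h2, neg_neg]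
  inv_eq := by
    have hs := sphere_notMem hr le_rfl h
    have h2 : dist μ μ < r := by simpa
    refine ⟨-resCauchy a μ r μ, fun y hy => (commute_resCauchy hr hs h2.ne hy).neg_right, ?_⟩
    rw [mul_neg, ← neg_mul, neg_sub, sub_mul_resCauchy_inside hr hs h2]
end RieszProjection

/-! ### Isolated points of the spectrum -/

theorem isUnit_of_commute_mul_eq_one {R : Type*} [Ring R] {x r : R} (hc : Commute x r)
    (h : x * r = 1) : IsUnit x :=
  ⟨⟨x, r, h, hc.eq ▸ h⟩, rfl⟩

theorem isolated_of_notMem_closure {S : Set ℂ} {z : ℂ} (h : z ∉ closure (S \ {z})) :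
    ∃ ε > 0, ∀ s ∈ S, s ≠ z → ε < dist s z := by
  rw [Metric.mem_closure_iff] at h
  push Not at h
  obtain ⟨ε, hε, h⟩ := h
  refine ⟨ε / 2, by positivity, fun s hs hne => ?_⟩
  have := h s ⟨hs, hne⟩
  rw [dist_comm] at this
  linarith

section Isolated
variable {A : Type*} [NormedRing A] [NormedAlgebra ℂ A] [CompleteSpace A]

/-- A quasinilpotent element stays quasinilpotent after multiplication by a commuting one: by
Gelfand's formula some power of `s⁻¹ q g` has norm less than `1`. -/
theorem isUnit_sub_quasinilpotent_mul {q g : A} (hq : ∀ w ∈ spectrum ℂ q, w = 0)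
    (hc : Commute q g) {s : ℂ} (hs : s ≠ 0) : IsUnit (algebraMap ℂ A s - q * g) := by
  have hrad : spectralRadius ℂ q = 0 := by
    unfold spectralRadius
    simp only [ENNReal.iSup_eq_zero]
    intro w hw
    simp [hq w hw]
  have hlim := spectrum.pow_norm_pow_one_div_tendsto_nhds_spectralRadius q
  rw [hrad] at hlim
  set c : ℝ := (‖s⁻¹‖ * ‖g‖ + 1)⁻¹ with hcdef
  have hc0 : 0 < c := by positivity
  have hev := (hlim.eventually_lt_const (ENNReal.ofReal_pos.2 hc0)).and
    (Filter.eventually_ge_atTop 1)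
  obtain ⟨n, hn, hn1⟩ := hev.exists
  have hn' : ‖q ^ n‖ ^ (1 / n : ℝ) < c := (ENNReal.ofReal_lt_ofReal_iff hc0).1 hn
  have hnpos : (0 : ℝ) < n := by exact_mod_cast hn1
  have hqn : ‖q ^ n‖ < c ^ n := by
    have := pow_lt_pow_left₀ hn' (by positivity) (by omega : n ≠ 0)
    rwa [← Real.rpow_natCast, ← Real.rpow_mul (norm_nonneg _), one_div,
      inv_mul_cancel₀ hnpos.ne', Real.rpow_one] at this
  set X := s⁻¹ • (q * g) with hX
  have hXn : ‖X ^ n‖ < 1 := by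
    have e : X ^ n = s⁻¹ ^ n • (q ^ n * g ^ n) := by rw [hX, smul_pow, hc.mul_pow]
    have h1 : ‖g ^ n‖ ≤ ‖g‖ ^ n := norm_pow_le' g hn1
    have h2 : c * (‖s⁻¹‖ * ‖g‖) ≤ 1 := by
      rw [hcdef, inv_mul_le_iff₀ (by positivity)]; linarith
    have h3 : 0 < ‖s⁻¹‖ ^ n := by
      have : s⁻¹ ≠ 0 := inv_ne_zero hs
      positivity
    have hle : ‖X ^ n‖ ≤ ‖s⁻¹‖ ^ n * (‖q ^ n‖ * ‖g‖ ^ n) := by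
      rw [e]
      refine (norm_smul_le _ _).trans ?_
      rw [norm_pow]
      gcongr
      exact (norm_mul_le _ _).trans (by gcongr)
    by_cases hg : ‖g‖ = 0
    · rw [hg, zero_pow (by omega), mul_zero, mul_zero] at hle
      linarith
    · have hg' : 0 < ‖g‖ := lt_of_le_of_ne (norm_nonneg _) (Ne.symm hg)
      calc ‖X ^ n‖ ≤ ‖s⁻¹‖ ^ n * (‖q ^ n‖ * ‖g‖ ^ n) := hle
        _ < ‖s⁻¹‖ ^ n * (c ^ n * ‖g‖ ^ n) := by gcongr
        _ = (c * (‖s⁻¹‖ * ‖g‖)) ^ n := by ring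
        _ ≤ 1 := pow_le_one₀ (by positivity) h2
  have hu : IsUnit (1 - X ^ n) := isUnit_one_sub_of_norm_lt_one hXn
  have hu1 : IsUnit (1 - X) := by
    have hcm : Commute (1 - X) (∑ i ∈ Finset.range n, X ^ i) := by
      unfold Commute SemiconjBy
      rw [mul_neg_geom_sum, geom_sum_mul_neg]
    rw [← mul_neg_geom_sum] at hu
    exact (hcm.isUnit_mul_iff.1 hu).1
  have e : algebraMap ℂ A s - q * g = algebraMap ℂ A s * (1 - X) := by
    rw [mul_sub, mul_one, hX, ← Algebra.smul_def, smul_smul, mul_inv_cancel₀ hs, one_smul]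
  rw [e]
  exact ((isUnit_iff_ne_zero.2 hs).map (algebraMap ℂ A)).mul hu1

omit [NormedAlgebra ℂ A] [CompleteSpace A] in
theorem Bicommutes.commute {a x y : A} (hx : Bicommutes a x) (hy : Bicommutes a y) :
    Commute x y :=
  hy x (hx a (Commute.refl a)).symm

omit [CompleteSpace A] in
/-- On the range of the spectral idempotent of `μ`, the element `a - μ` is quasinilpotent. -/
theorem IsRiesz.quasinilpotent {a p : A} {μ : ℂ} (h : IsRiesz a μ p) :
    ∀ w ∈ spectrum ℂ ((a - algebraMap ℂ A μ) * p), w = 0 := by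
  intro w hw
  by_contra hw0
  refine hw ?_
  obtain ⟨u, hu, hup⟩ := h.inv_ne (μ + w) (by simpa using hw0)
  have hpa : Commute a p := h.bic a (Commute.refl a)
  have hua : Commute a u := hu a (Commute.refl a)
  have hpu : Commute p u := h.bic.commute hu
  have hpa' : Commute (a - algebraMap ℂ A μ) p := hpa.sub_left (Algebra.commutes μ p)
  have hua' : Commute (a - algebraMap ℂ A μ) u := hua.sub_left (Algebra.commutes μ u)
  set b := a - algebraMap ℂ A μ with hb
  have hbu : b * u = p + w • u := by
    have : (b - algebraMap ℂ A w) * u = p := by rw [← hup, hb, map_add]; noncomm_ring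
    rw [sub_mul, ← Algebra.smul_def, sub_eq_iff_eq_add] at this
    exact this
  have hp2 := h.idem
  refine isUnit_of_commute_mul_eq_one (r := w⁻¹ • (1 - p) - u * p) ?_ ?_
  · refine Commute.sub_left (Algebra.commutes _ _) ?_
    have h1 : Commute (b * p) p := hpa'.mul_left (Commute.refl p)
    have h2 : Commute (b * p) u := hua'.mul_left hpu
    exact (((Commute.one_right _).sub_right h1).smul_right _).sub_right (h2.mul_right h1)
  · have e1 : b * p * (1 - p) = 0 := by rw [mul_sub, mul_one, mul_assoc, hp2, sub_self]
    have e2 : b * p * (u * p) = p + w • (u * p) := by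
      calc b * p * (u * p) = b * (p * u) * p := by noncomm_ring
        _ = (b * u) * (p * p) := by rw [hpu.eq]; noncomm_ring
        _ = p + w • (u * p) := by rw [hbu, hp2, add_mul, hp2, smul_mul_assoc]
    rw [sub_mul, mul_sub, mul_sub, ← Algebra.smul_def, ← Algebra.smul_def, smul_smul,
      mul_inv_cancel₀ hw0, one_smul, mul_smul_comm, e1, e2, smul_zero]
    abel

/-- If `z - a` is the sum of an invertible `g` and a commuting `x` such that `-1` is an isolated
point of the spectrum of `x g⁻¹`, then `z` is isolated in the spectrum of `a`. -/
theorem isolated_of_browder {a x : A} {z : ℂ} (g : Aˣ) (hxg : Commute x g)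
    (h : algebraMap ℂ A z - a = x + g)
    (hiso : (-1 : ℂ) ∉ closure (spectrum ℂ (x * ↑g⁻¹) \ {-1})) :
    ∃ ε > 0, ∀ s ∈ spectrum ℂ a, s ≠ z → ε < dist s z := by
  set y : A := x * ↑g⁻¹ with hy
  obtain ⟨r, hr, hr'⟩ := isolated_of_notMem_closure hiso
  obtain ⟨p, hp⟩ : ∃ p, IsRiesz y (-1) p := ⟨_, isRiesz_rieszProj hr hr'⟩
  have hgy : Commute (g : A) y :=
    hxg.symm.mul_right ((Commute.refl (g : A)).units_inv_right)
  have hgp : Commute (g : A) p := hp.bic _ hgy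
  obtain ⟨u, hu, hup⟩ := hp.inv_eq
  have hgu : Commute (g : A) u := hu _ hgy
  have hpu : Commute p u := hp.bic.commute hu
  have hyp : Commute y p := hp.bic y (Commute.refl y)
  have hyu : Commute y u := hu y (Commute.refl y)
  set b : A := y - algebraMap ℂ A (-1) with hb
  have hbp : Commute b p := hyp.sub_left (Algebra.commutes _ p)
  have hbu : Commute b u := hyu.sub_left (Algebra.commutes _ u)
  have hgb : Commute (g : A) b := hgy.sub_right (Algebra.commutes _ (g : A)).symm
  have hza : algebraMap ℂ A z - a = b * g := by
    rw [h, hb, hy, map_neg, map_one, sub_neg_eq_add, add_mul, mul_assoc, Units.inv_mul, mul_one,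
      one_mul]
  set v : A := ↑g⁻¹ * (u * (1 - p)) with hv
  have hp2 := hp.idem
  have hp1 : (1 - p) * (1 - p) = 1 - p := by
    rw [mul_sub, mul_one, sub_mul, one_mul, hp2]; abel
  have hbgv : b * g * v = 1 - p := by
    rw [hv, mul_assoc, ← mul_assoc (g : A), Units.mul_inv, one_mul, ← mul_assoc, hup, hp1]
  have hpv : (1 - p) * v = v := by
    have h1 : Commute (1 - p) (↑g⁻¹ : A) :=
      ((Commute.one_right _).sub_right hgp).symm.units_inv_right
    have h2 : Commute (1 - p) u := (Commute.one_left u).sub_left hpu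
    rw [hv, ← mul_assoc, h1.eq, mul_assoc, ← mul_assoc (1 - p), h2.eq, mul_assoc, hp1]
  have hbgvc : Commute (b * g) v := by
    have hbg : Commute b (↑g⁻¹ : A) := hgb.symm.units_inv_right
    have hgg : Commute (g : A) (↑g⁻¹ : A) := (Commute.refl (g : A)).units_inv_right
    have hb1 : Commute b (1 - p) := (Commute.one_right _).sub_right hbp
    have hg1 : Commute (g : A) (1 - p) := (Commute.one_right _).sub_right hgp
    exact ((hbg.mul_right (hbu.mul_right hb1))).mul_left (hgg.mul_right (hgu.mul_right hg1))
  refine ⟨(‖v‖ + 1)⁻¹ / 2, by positivity, fun s hs hsz => ?_⟩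
  by_contra hlt
  refine hs ?_
  set t := s - z with ht
  have ht0 : t ≠ 0 := sub_ne_zero.2 hsz
  have htv : ‖t‖ * ‖v‖ < 1 := by
    have h1 : ‖t‖ ≤ (‖v‖ + 1)⁻¹ / 2 := by rw [ht, ← dist_eq_norm]; linarith
    have h3 : (‖v‖ + 1)⁻¹ * (‖v‖ + 1) = 1 := inv_mul_cancel₀ (by positivity)
    have h4 : 0 < (‖v‖ + 1)⁻¹ := by positivity
    nlinarith [norm_nonneg v, norm_nonneg t]
  have hX : algebraMap ℂ A s - a = algebraMap ℂ A t + b * g := by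
    rw [← hza, ht, map_sub]; abel
  change IsUnit (algebraMap ℂ A s - a)
  rw [hX]
  have htc : ∀ w : A, Commute (algebraMap ℂ A t) w := fun w => Algebra.commutes t w
  have hbgp : Commute (b * g) p := hbp.mul_left hgp
  -- the part on the range of `p`
  have hq := isUnit_sub_quasinilpotent_mul (q := b * p) (g := -(g : A)) hp.quasinilpotent
    ((hgb.symm.mul_left hgp.symm).neg_right) ht0
  rw [mul_neg, sub_neg_eq_add] at hq
  obtain ⟨U, hU⟩ := hq
  have hXU : Commute (algebraMap ℂ A t + b * g) (U : A) := by
    rw [hU]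
    have h1 : Commute (b * g) (b * p * g) :=
      (((Commute.refl b).mul_left hgb).mul_right hbgp).mul_right
        (hgb.symm.mul_left (Commute.refl _))
    exact ((htc _).add_left (((htc _).symm).add_right h1))
  have hpU : (algebraMap ℂ A t + b * g) * (p * ↑U⁻¹) = p := by
    have h1 : (algebraMap ℂ A t + b * g) * p = p * U := by
      rw [hU, add_mul, mul_add, (htc p).eq, mul_assoc b, hgp.eq, ← mul_assoc, mul_assoc b p g,
        ← mul_assoc p b, ← hbp.eq, mul_assoc b p, ← mul_assoc p p, hp2]
    rw [← mul_assoc, h1, mul_assoc, Units.mul_inv, mul_one]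
  -- the part on the range of `1 - p`
  obtain ⟨V, hV⟩ : IsUnit (1 + t • v) := by
    have : ‖-(t • v)‖ < 1 := by rw [norm_neg]; exact (norm_smul_le _ _).trans_lt htv
    simpa using isUnit_one_sub_of_norm_lt_one this
  have hXv : Commute (algebraMap ℂ A t + b * g) v := (htc v).add_left hbgvc
  have hXV : Commute (algebraMap ℂ A t + b * g) (V : A) := by
    rw [hV]
    exact (Commute.one_right _).add_right (hXv.smul_right t)
  have hvV : (algebraMap ℂ A t + b * g) * (v * ↑V⁻¹) = 1 - p := by
    have h1 : (algebraMap ℂ A t + b * g) * v = (1 - p) * V := by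
      rw [hV, add_mul, hbgv, mul_add, mul_one, mul_smul_comm, hpv, ← Algebra.smul_def, add_comm]
    rw [← mul_assoc, h1, mul_assoc, Units.mul_inv, mul_one]
  refine isUnit_of_commute_mul_eq_one (r := p * ↑U⁻¹ + v * ↑V⁻¹) ?_ ?_
  · exact ((((htc p).add_left hbgp).mul_right hXU.units_inv_right).add_right
      (hXv.mul_right hXV.units_inv_right))
  · rw [mul_add, hpU, hvV]; abel

/-- Semicontinuity of the spectrum from below at an isolated point: if `x` is approximated by
elements whose spectra avoid a fixed disc around `1` with boundary circle in the resolvent set of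
`x`, then `1` is not in the spectrum of `x`. The resolvents of the approximants are bounded on the
circle, hence, by the maximum modulus principle, at its centre. -/
theorem one_notMem_spectrum_of_approx {x : A} {r : ℝ} (hr : 0 < r)
    (hs : ∀ s ∈ Metric.sphere (1 : ℂ) r, s ∉ spectrum ℂ x)
    (happ : ∀ η > 0, ∃ x' : A, ‖x' - x‖ < η ∧
      ∀ s ∈ Metric.closedBall (1 : ℂ) r, s ∉ spectrum ℂ x') :
    (1 : ℂ) ∉ spectrum ℂ x := by
  obtain ⟨M, hM⟩ := (isCompact_sphere (1 : ℂ) r).exists_bound_of_continuousOn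
    (continuousOn_resolvent x hs)
  set N := max M 1 with hN
  have hN1 : 1 ≤ N := le_max_right _ _
  obtain ⟨x', hx', hsp⟩ := happ (1 / (2 * N)) (by positivity)
  have hx2 : ‖x' - x‖ * (2 * N) < 1 := by rwa [lt_div_iff₀ (by positivity)] at hx'
  have hbd : ∀ s ∈ Metric.sphere (1 : ℂ) r, ‖resolvent x' s‖ ≤ 2 * N := by
    intro s hss
    have h1 := sub_mul_resolvent x (hs s hss)
    have h2 := resolvent_mul_sub x' (hsp s (Metric.sphere_subset_closedBall hss))
    have h3 : resolvent x' s = resolvent x s + resolvent x' s * (x' - x) * resolvent x s := by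
      have e : x' - x = (algebraMap ℂ A s - x) - (algebraMap ℂ A s - x') := by abel
      rw [e, mul_sub, sub_mul, h2, mul_assoc, h1]
      simp
    have h4 : ‖resolvent x s‖ ≤ N := (hM s hss).trans (le_max_left _ _)
    have h5 : ‖resolvent x' s‖ ≤ N + ‖resolvent x' s‖ * ‖x' - x‖ * N := by
      conv_lhs => rw [h3]
      refine (norm_add_le _ _).trans (add_le_add h4 ?_)
      refine (norm_mul_le _ _).trans ?_
      gcongr
      exact norm_mul_le _ _
    nlinarith [norm_nonneg (resolvent x' s)]
  have hbd1 : ‖resolvent x' (1 : ℂ)‖ ≤ 2 * N := by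
    refine Complex.norm_le_of_forall_mem_frontier_norm_le (f := resolvent x')
      (U := Metric.ball (1 : ℂ) r)
      Metric.isBounded_ball ?_ ?_ (subset_closure (Metric.mem_ball_self hr))
    · refine ⟨fun z hz => (differentiableAt_resolvent x'
        (hsp z (Metric.ball_subset_closedBall hz))).differentiableWithinAt, ?_⟩
      exact continuousOn_resolvent x' fun z hz => hsp z (Metric.closure_ball_subset_closedBall hz)
    · intro z hz
      exact hbd z (Metric.frontier_ball_subset_sphere hz)
  have h1mem : (1 : ℂ) ∉ spectrum ℂ x' := hsp 1 (Metric.mem_closedBall_self hr.le)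
  have h6 := sub_mul_resolvent x' h1mem
  have h7 : IsUnit (algebraMap ℂ A 1 - x') := Set.notMem_compl_iff.1 h1mem
  have h8 : IsUnit (1 - resolvent x' (1 : ℂ) * (x - x')) := by
    refine isUnit_one_sub_of_norm_lt_one ((norm_mul_le _ _).trans_lt ?_)
    rw [norm_sub_rev x x']
    nlinarith [norm_nonneg (x' - x)]
  have h9 : algebraMap ℂ A 1 - x = (algebraMap ℂ A 1 - x') * (1 - resolvent x' (1 : ℂ) * (x - x')) := by
    rw [mul_sub, ← mul_assoc, h6, mul_one, one_mul]; abel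
  intro hmem
  refine hmem ?_
  change IsUnit (algebraMap ℂ A 1 - x)
  rw [h9]
  exact h7.mul h8

end Isolated

/-- If all points outside a finite set `Ω` are isolated in a compact `K`, then the points of `K \ Ω`
occur in a sequence `l` whose distance to a sequence `o` in `Ω` tends to zero. Some terms of `l` may
lie in `Ω`: `K \ Ω` can be finite or empty. -/
theorem exists_enumeration {K Ω : Set ℂ} (hK : IsCompact K) (hΩ : Ω.Finite) (hne : Ω.Nonempty)
    (hiso : ∀ z, z ∉ Ω → ∃ ε > 0, ∀ s ∈ K, s ≠ z → ε < dist s z) :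
    ∃ l o : ℕ → ℂ, (∀ k, o k ∈ Ω) ∧ (∀ z ∈ K \ Ω, ∃ k, l k = z) ∧
      ∀ ε > 0, ∃ N, ∀ k ≥ N, ‖l k - o k‖ < ε := by
  classical
  have hnear : ∀ z : ℂ, ∃ w ∈ Ω, ∀ w' ∈ Ω, dist z w ≤ dist z w' := fun z =>
    Set.exists_min_image Ω (fun w => dist z w) hΩ hne
  choose near hnear1 hnear2 using hnear
  obtain ⟨w0, hw0⟩ := hne
  have hfin : ∀ ε > 0, {z ∈ K \ Ω | ε ≤ dist z (near z)}.Finite := by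
    intro ε hε
    by_contra hinf
    obtain ⟨c, hcK, hc⟩ := Set.Infinite.exists_accPt_of_subset_isCompact hinf hK
      (fun z hz => hz.1.1)
    rw [accPt_iff_nhds] at hc
    by_cases hcΩ : c ∈ Ω
    · obtain ⟨s, ⟨hs1, hs2⟩, hs3⟩ := hc (Metric.ball c ε) (Metric.ball_mem_nhds c hε)
      have h1 := hnear2 s c hcΩ
      have h2 : dist s c < ε := hs1
      linarith [hs2.2]
    · obtain ⟨δ, hδ, hδ'⟩ := hiso c hcΩ
      obtain ⟨s, ⟨hs1, hs2⟩, hs3⟩ := hc (Metric.ball c δ) (Metric.ball_mem_nhds c hδ)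
      exact absurd (hδ' s hs2.1.1 hs3) (not_lt.2 (le_of_lt hs1))
  have hcount : (K \ Ω).Countable := by
    refine Set.Countable.mono (s₂ := ⋃ n : ℕ, {z ∈ K \ Ω | 1 / ((n : ℝ) + 1) ≤ dist z (near z)}) ?_
      (Set.countable_iUnion fun n => (hfin _ (by positivity)).countable)
    intro z hz
    have hpos : 0 < dist z (near z) := dist_pos.2 fun h => hz.2 (h ▸ hnear1 z)
    obtain ⟨n, hn⟩ := exists_nat_one_div_lt hpos
    exact Set.mem_iUnion.2 ⟨n, hz, hn.le⟩
  have : Countable ↥(K \ Ω) := hcount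
  obtain ⟨f, hf⟩ := exists_injective_nat ↥(K \ Ω)
  set l : ℕ → ℂ := Function.extend f (fun z => (z : ℂ)) (fun _ => w0) with hl
  have hlf : ∀ z : ↥(K \ Ω), l (f z) = z := fun z => hf.extend_apply _ _ z
  have hnw0 : near w0 = w0 := by
    have := hnear2 w0 w0 hw0
    rw [dist_self] at this
    exact (dist_le_zero.1 this).symm
  have hcase : ∀ k, (∃ z : ↥(K \ Ω), f z = k) ∨ l k = w0 := by
    intro k
    by_cases h : ∃ z : ↥(K \ Ω), f z = k
    · exact Or.inl h
    · exact Or.inr (Function.extend_apply' _ _ _ h)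
  refine ⟨l, fun k => near (l k), fun k => hnear1 _, fun z hz => ⟨f ⟨z, hz⟩, hlf _⟩, ?_⟩
  · intro ε hε
    have hfin2 : {k | ε ≤ ‖l k - near (l k)‖}.Finite := by
      refine (((hfin ε hε).preimage (f := ((↑) : ↥(K \ Ω) → ℂ))
        Subtype.val_injective.injOn).image f).subset ?_
      intro k hk
      rcases hcase k with ⟨z, rfl⟩ | h
      · refine ⟨z, ⟨z.2, ?_⟩, rfl⟩
        have : ε ≤ ‖l (f z) - near (l (f z))‖ := hk
        rwa [hlf, ← dist_eq_norm] at this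
      · have : ε ≤ ‖l k - near (l k)‖ := hk
        rw [h, hnw0, sub_self, norm_zero] at this
        linarith
    obtain ⟨N, hN⟩ := hfin2.bddAbove
    refine ⟨N + 1, fun k hk => ?_⟩
    by_contra hlt
    have := hN (show k ∈ {k | ε ≤ ‖l k - near (l k)‖} from not_lt.1 hlt)
    omega

/-! ### Corners and block triangular elements -/

/-- `u` is an inverse of the compression of `y` to the corner `e A e` of an idempotent `e`. -/
structure CornerInv {R : Type*} [Ring R] (e y u : R) : Prop where
  left_mul : e * u = u
  right_mul : u * e = u
  mul_inv : e * y * u = e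
  inv_mul : u * y * e = e

theorem CornerInv.congr {R : Type*} [Ring R] {e y y' u : R} (h : CornerInv e y u)
    (hy : e * y * e = e * y' * e) : CornerInv e y' u where
  left_mul := h.left_mul
  right_mul := h.right_mul
  mul_inv := by rw [← h.left_mul, ← mul_assoc, ← hy, mul_assoc, h.left_mul, h.mul_inv]
  inv_mul := by
    rw [← h.right_mul, mul_assoc, mul_assoc, ← mul_assoc e, ← hy, mul_assoc e, ← mul_assoc,
      h.right_mul, ← mul_assoc, h.inv_mul]

/-- Block triangular matrices with invertible diagonal blocks are invertible. -/
theorem CornerInv.add {R : Type*} [Ring R] {e f y u v : R} (hu : CornerInv e y u)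
    (hv : CornerInv f y v) (hef : e * f = 0) (hfe : f * e = 0) (htri : f * y * e = 0) :
    CornerInv (e + f) y (u + v - u * y * v) := by
  have h1 : f * u = 0 := by rw [← hu.left_mul, ← mul_assoc, hfe, zero_mul]
  have h2 : u * f = 0 := by rw [← hu.right_mul, mul_assoc, hef, mul_zero]
  have h3 : e * v = 0 := by rw [← hv.left_mul, ← mul_assoc, hef, zero_mul]
  have h4 : v * e = 0 := by rw [← hv.right_mul, mul_assoc, hfe, mul_zero]
  have h5 : f * y * u = 0 := by rw [← hu.left_mul, ← mul_assoc, htri, zero_mul]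
  have h6 : v * y * e = 0 := by
    rw [← hv.right_mul, mul_assoc, mul_assoc, ← mul_assoc f, htri, mul_zero]
  have e1 := hu.left_mul
  have e2 := hu.right_mul
  have e3 := hu.mul_inv
  have e4 := hu.inv_mul
  have f1 := hv.left_mul
  have f2 := hv.right_mul
  have f3 := hv.mul_inv
  have f4 := hv.inv_mul
  constructor
  · calc (e + f) * (u + v - u * y * v)
        = e * u + e * v + f * u + f * v - (e * u) * y * v - (f * u) * y * v := by noncomm_ring
      _ = _ := by rw [e1, h3, h1, f1]; noncomm_ring
  · calc (u + v - u * y * v) * (e + f)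
        = u * e + u * f + v * e + v * f - u * y * (v * e) - u * y * (v * f) := by noncomm_ring
      _ = _ := by rw [e2, h2, h4, f2]; noncomm_ring
  · calc (e + f) * y * (u + v - u * y * v)
        = e * y * u + e * y * v + f * y * u + f * y * v - (e * y * u) * y * v
            - (f * y * u) * y * v := by noncomm_ring
      _ = _ := by rw [e3, h5, f3]; noncomm_ring
  · calc (u + v - u * y * v) * y * (e + f)
        = u * y * e + u * y * f + v * y * e + v * y * f - u * y * (v * y * e)
            - u * y * (v * y * f) := by noncomm_ring
      _ = _ := by rw [e4, h6, f4]; noncomm_ring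

theorem CornerInv.isUnit {R : Type*} [Ring R] {y u : R} (h : CornerInv 1 y u) : IsUnit y :=
  ⟨⟨y, u, by simpa using h.mul_inv, by simpa using h.inv_mul⟩, rfl⟩

section Flag
variable {A : Type*} [NormedRing A] [NormedAlgebra ℂ A]

/-- An increasing sequence of idempotents `P k` in the double commutant of `a`, together with
idempotents `Q k` having the same ranges (in applications, the range projections) whose kernels
decrease as well. The elements `Q (k + 1) - Q k` are then mutually orthogonal idempotents, with
respect to which `a` is block upper triangular. -/
structure IsFlag (a : A) (P Q : ℕ → A) : Prop where
  bic : ∀ k, Bicommutes a (P k)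
  idem : ∀ k, P k * P k = P k
  zero : P 0 = 0
  succ_mul : ∀ k, P (k + 1) * P k = P k
  mul_proj : ∀ k, P k * Q k = Q k
  proj_mul : ∀ k, Q k * P k = P k
  proj_mul_succ : ∀ k, Q k * Q (k + 1) = Q k

namespace IsFlag
variable {a : A} {P Q : ℕ → A} (h : IsFlag a P Q)
include h

omit [NormedAlgebra ℂ A] in
theorem proj_zero : Q 0 = 0 := by rw [← h.mul_proj, h.zero, zero_mul]

omit [NormedAlgebra ℂ A] in
theorem proj_idem (k : ℕ) : Q k * Q k = Q k := by
  conv_lhs => rw [← h.mul_proj k, ← mul_assoc, mul_assoc (P k), h.proj_mul, h.idem, h.mul_proj]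

omit [NormedAlgebra ℂ A] in
theorem succ_proj_mul (k : ℕ) : Q (k + 1) * P k = P k := by
  rw [← h.succ_mul k, ← mul_assoc, h.proj_mul]

omit [NormedAlgebra ℂ A] in
theorem succ_proj_mul_proj (k : ℕ) : Q (k + 1) * Q k = Q k := by
  rw [← h.mul_proj k, ← mul_assoc, h.succ_proj_mul]

omit [NormedAlgebra ℂ A] in
theorem mul_succ (k : ℕ) : P k * P (k + 1) = P k := by
  rw [(h.bic k).commute (h.bic (k + 1)), h.succ_mul]

theorem commute_sub (k : ℕ) (w : ℂ) : Commute (a - algebraMap ℂ A w) (P k) :=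
  Commute.sub_left (h.bic k a (Commute.refl a)) (Algebra.commutes w (P k))

/-- The range of `Q k` is invariant under `a - w`. -/
theorem invariant (k : ℕ) (w : ℂ) :
    Q k * (a - algebraMap ℂ A w) * Q k = (a - algebraMap ℂ A w) * Q k := by
  have hc := h.commute_sub k w
  set y := a - algebraMap ℂ A w
  calc Q k * y * Q k = Q k * (y * P k) * Q k := by
        rw [mul_assoc, mul_assoc, mul_assoc, h.mul_proj]
    _ = (Q k * P k) * y * Q k := by rw [hc.eq]; noncomm_ring
    _ = y * (P k * Q k) := by rw [h.proj_mul, ← hc.eq]; noncomm_ring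
    _ = y * Q k := by rw [h.mul_proj]

omit [NormedAlgebra ℂ A] in
theorem diff_mul_proj (k : ℕ) : (Q (k + 1) - Q k) * Q k = 0 := by
  rw [sub_mul, h.succ_proj_mul_proj, h.proj_idem, sub_self]

omit [NormedAlgebra ℂ A] in
theorem proj_mul_diff (k : ℕ) : Q k * (Q (k + 1) - Q k) = 0 := by
  rw [mul_sub, h.proj_mul_succ, h.proj_idem, sub_self]

omit [NormedAlgebra ℂ A] in
theorem diff_idem (k : ℕ) : (Q (k + 1) - Q k) * (Q (k + 1) - Q k) = Q (k + 1) - Q k := by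
  rw [mul_sub, h.diff_mul_proj, sub_mul, h.proj_idem, h.proj_mul_succ, sub_zero]

/-- Inverse of `a - w` on a diagonal block. -/
theorem cornerInv_diff (k : ℕ) {w : ℂ}
    (hw : ∃ u, Bicommutes a u ∧ (a - algebraMap ℂ A w) * u = P (k + 1) - P k) :
    ∃ u, CornerInv (Q (k + 1) - Q k) (a - algebraMap ℂ A w) u := by
  obtain ⟨u, hu, huw⟩ := hw
  have hyu : Commute (a - algebraMap ℂ A w) u :=
    Commute.sub_left (hu a (Commute.refl a)) (Algebra.commutes w u)
  have hyP := h.commute_sub k w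
  have hyP' := h.commute_sub (k + 1) w
  have hyQ := h.invariant k w
  have hyQ' := h.invariant (k + 1) w
  have huP : Commute u (P k) := hu.commute (h.bic k)
  have huP' : Commute u (P (k + 1)) := hu.commute (h.bic (k + 1))
  set y := a - algebraMap ℂ A w
  set e := Q (k + 1) - Q k with he
  set D := P (k + 1) - P k with hD
  set U := D * u with hU
  have hDD : D * D = D := by
    rw [hD, mul_sub, sub_mul, sub_mul, h.idem, h.idem, h.mul_succ, h.succ_mul]; abel
  have huD : Commute u D := huP'.sub_right huP
  have hyD : Commute y D := hyP'.sub_right hyP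
  have hyU : y * U = D := by rw [hU, ← mul_assoc, hyD.eq, mul_assoc, huw, hDD]
  have hUy : U * y = D := by rw [hU, mul_assoc, ← hyu.eq, huw, hDD]
  have hDP : D * P k = 0 := by rw [hD, sub_mul, h.succ_mul, h.idem, sub_self]
  have hP'D : P (k + 1) * D = D := by rw [hD, mul_sub, h.idem, h.succ_mul]
  have hUP : U * P k = 0 := by rw [hU, mul_assoc, huP.eq, ← mul_assoc, hDP, zero_mul]
  have hUQ : U * Q k = 0 := by rw [← h.mul_proj, ← mul_assoc, hUP, zero_mul]
  have hQ'U : Q (k + 1) * U = U := by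
    rw [hU, ← mul_assoc, ← hP'D, ← mul_assoc (Q _), h.proj_mul]
  have hee : e * e = e := h.diff_idem k
  have heP : e * P k = 0 := by rw [he, sub_mul, h.succ_proj_mul, h.proj_mul, sub_self]
  have heQ : e * Q k = 0 := h.diff_mul_proj k
  have hP'e : P (k + 1) * e = e := by
    rw [he, mul_sub, h.mul_proj]
    congr 1
    rw [← h.mul_proj k, ← mul_assoc, h.succ_mul]
  have heDe : e * D * e = e := by
    rw [hD, mul_sub e, heP, sub_zero, mul_assoc, hP'e, hee]
  have hQ'e : Q (k + 1) * e = e := by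
    rw [he, mul_sub, h.proj_idem, h.succ_proj_mul_proj]
  have heyQ : e * y * Q k = 0 := by
    rw [mul_assoc, ← hyQ, ← mul_assoc, ← mul_assoc, heQ, zero_mul, zero_mul]
  have hye : Q (k + 1) * y * e = y * e := by
    rw [← hQ'e, ← mul_assoc, hyQ', mul_assoc]
  have heU : e * U = U - Q k * U := by rw [he, sub_mul, hQ'U]
  have hUe : U * e = U * Q (k + 1) := by rw [he, mul_sub, hUQ, sub_zero]
  refine ⟨e * U * e, ?_, ?_, ?_, ?_⟩
  · rw [← mul_assoc, ← mul_assoc, hee]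
  · rw [mul_assoc, hee]
  · calc e * y * (e * U * e) = e * y * (e * U) * e := by noncomm_ring
      _ = e * (y * U) * e - (e * y * Q k) * U * e := by rw [heU]; noncomm_ring
      _ = e := by rw [hyU, heDe, heyQ]; noncomm_ring
  · calc e * U * e * y * e = e * (U * e) * y * e := by noncomm_ring
      _ = e * U * (Q (k + 1) * y * e) := by rw [hUe]; noncomm_ring
      _ = e * (U * y) * e := by rw [hye]; noncomm_ring
      _ = e := by rw [hUy, heDe]

/-- Inverse of `a - w` on the last diagonal block. -/
theorem cornerInv_one_sub (n : ℕ) {w : ℂ}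
    (hw : ∃ u, Bicommutes a u ∧ (a - algebraMap ℂ A w) * u = 1 - P n) :
    ∃ u, CornerInv (1 - Q n) (a - algebraMap ℂ A w) u := by
  obtain ⟨u, hu, huw⟩ := hw
  have hyu : Commute (a - algebraMap ℂ A w) u :=
    Commute.sub_left (hu a (Commute.refl a)) (Algebra.commutes w u)
  have hyP := h.commute_sub n w
  have hyQ := h.invariant n w
  have huP : Commute u (P n) := hu.commute (h.bic n)
  set y := a - algebraMap ℂ A w
  set f := 1 - Q n with hf
  set D := 1 - P n with hD
  set U := D * u with hU
  have hDD : D * D = D := by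
    rw [hD, mul_sub, sub_mul, sub_mul, h.idem]; noncomm_ring
  have hyD : Commute y D := (Commute.one_right y).sub_right hyP
  have hyU : y * U = D := by rw [hU, ← mul_assoc, hyD.eq, mul_assoc, huw, hDD]
  have hUy : U * y = D := by rw [hU, mul_assoc, ← hyu.eq, huw, hDD]
  have hDP : D * P n = 0 := by rw [hD, sub_mul, h.idem, one_mul, sub_self]
  have hUP : U * P n = 0 := by rw [hU, mul_assoc, huP.eq, ← mul_assoc, hDP, zero_mul]
  have hUQ : U * Q n = 0 := by rw [← h.mul_proj, ← mul_assoc, hUP, zero_mul]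
  have hff : f * f = f := by
    rw [hf, mul_sub, sub_mul, sub_mul, h.proj_idem]; noncomm_ring
  have hfP : f * P n = 0 := by rw [hf, sub_mul, h.proj_mul, one_mul, sub_self]
  have hfQ : f * Q n = 0 := by rw [hf, sub_mul, h.proj_idem, one_mul, sub_self]
  have hfDf : f * D * f = f := by rw [hD, mul_sub f, hfP, sub_zero, mul_one, hff]
  have hfyQ : f * y * Q n = 0 := by
    rw [mul_assoc, ← hyQ, ← mul_assoc, ← mul_assoc, hfQ, zero_mul, zero_mul]
  have hfyf : f * y * f = f * y := by
    conv_lhs => rw [hf, mul_sub, ← hf, hfyQ, mul_one, sub_zero]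
  have hUf : U * f = U := by rw [hf, mul_sub, hUQ, mul_one, sub_zero]
  refine ⟨f * U * f, ?_, ?_, ?_, ?_⟩
  · rw [← mul_assoc, ← mul_assoc, hff]
  · rw [mul_assoc, hff]
  · calc f * y * (f * U * f) = (f * y * f) * U * f := by noncomm_ring
      _ = f * (y * U) * f := by rw [hfyf]; noncomm_ring
      _ = f := by rw [hyU, hfDf]
  · calc f * U * f * y * f = f * (U * f) * y * f := by noncomm_ring
      _ = f * (U * y) * f := by rw [hUf]; noncomm_ring
      _ = f := by rw [hUy, hfDf]

theorem proj_mul_sum (β : ℕ → ℂ) (n : ℕ) :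
    Q n * ∑ k ∈ Finset.range n, β k • (Q (k + 1) - Q k) =
      ∑ k ∈ Finset.range n, β k • (Q (k + 1) - Q k) := by
  induction n with
  | zero => simp
  | succ n ih =>
    have h1 : Q (n + 1) * ∑ k ∈ Finset.range n, β k • (Q (k + 1) - Q k) =
        ∑ k ∈ Finset.range n, β k • (Q (k + 1) - Q k) := by
      rw [← ih, ← mul_assoc, h.succ_proj_mul_proj]
    rw [Finset.sum_range_succ, mul_add, h1, mul_smul_comm, mul_sub, h.proj_idem,
      h.succ_proj_mul_proj]

theorem sum_mul_proj (β : ℕ → ℂ) (n : ℕ) :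
    (∑ k ∈ Finset.range n, β k • (Q (k + 1) - Q k)) * Q n =
      ∑ k ∈ Finset.range n, β k • (Q (k + 1) - Q k) := by
  induction n with
  | zero => simp
  | succ n ih =>
    have h1 : (∑ k ∈ Finset.range n, β k • (Q (k + 1) - Q k)) * Q (n + 1) =
        ∑ k ∈ Finset.range n, β k • (Q (k + 1) - Q k) := by
      rw [← ih, mul_assoc, h.proj_mul_succ]
    rw [Finset.sum_range_succ, add_mul, h1, smul_mul_assoc, sub_mul, h.proj_idem,
      h.proj_mul_succ]

/-- Invertibility on the range of `Q n`, assembled block by block. -/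
theorem exists_cornerInv_sum {z : ℂ} {β : ℕ → ℂ} (n : ℕ)
    (hβ : ∀ k < n, ∃ u, Bicommutes a u ∧
      (a - algebraMap ℂ A (z + β k)) * u = P (k + 1) - P k) :
    ∃ u, CornerInv (Q n)
      (a - algebraMap ℂ A z - ∑ k ∈ Finset.range n, β k • (Q (k + 1) - Q k)) u := by
  induction n with
  | zero => exact ⟨0, by simp, by simp, by simp [h.proj_zero], by simp [h.proj_zero]⟩
  | succ n ih =>
    obtain ⟨u, hu⟩ := ih fun k hk => hβ k (by omega)
    obtain ⟨v, hv⟩ := h.cornerInv_diff n (hβ n (by omega))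
    have hQS := h.proj_mul_sum β n
    have hyQ := h.invariant n z
    have hQe := h.proj_mul_diff n
    have heQ := h.diff_mul_proj n
    have hee := h.diff_idem n
    rw [Finset.sum_range_succ]
    set S := ∑ k ∈ Finset.range n, β k • (Q (k + 1) - Q k)
    have heS : (Q (n + 1) - Q n) * S = 0 := by rw [← hQS, ← mul_assoc, heQ, zero_mul]
    have hsplit : Q (n + 1) = Q n + (Q (n + 1) - Q n) := by abel
    have hw : a - algebraMap ℂ A (z + β n) = a - algebraMap ℂ A z - β n • (1 : A) := by
      rw [map_add, Algebra.algebraMap_eq_smul_one (β n)]; abel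
    rw [hw] at hv
    set y := a - algebraMap ℂ A z
    set e := Q (n + 1) - Q n
    have heyQ : e * y * Q n = 0 := by
      rw [mul_assoc, ← hyQ, ← mul_assoc, ← mul_assoc, heQ, zero_mul, zero_mul]
    refine ⟨_, hsplit ▸ CornerInv.add (hu.congr ?_) (hv.congr ?_) hQe heQ ?_⟩
    · simp only [mul_sub, mul_add, sub_mul, mul_smul_comm, hQe, smul_zero, add_zero]
    · simp only [mul_sub, mul_add, sub_mul, mul_smul_comm, heS, hee, mul_one, zero_add]
    · simp only [mul_sub, mul_add, sub_mul, add_mul, mul_smul_comm, smul_mul_assoc, heS, hee, heQ,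
        heyQ, smul_zero, zero_mul, add_zero, sub_zero]

/-- Subtracting `β k` on the `k`-th block for `k < n` makes `a - z` invertible as soon as every
diagonal block becomes invertible. -/
theorem isUnit_sub_sum {z : ℂ} {β : ℕ → ℂ} (n : ℕ)
    (hβ : ∀ k < n, ∃ u, Bicommutes a u ∧
      (a - algebraMap ℂ A (z + β k)) * u = P (k + 1) - P k)
    (hz : ∃ u, Bicommutes a u ∧ (a - algebraMap ℂ A z) * u = 1 - P n) :
    IsUnit (a - algebraMap ℂ A z - ∑ k ∈ Finset.range n, β k • (Q (k + 1) - Q k)) := by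
  obtain ⟨u, hu⟩ := h.exists_cornerInv_sum n hβ
  obtain ⟨v, hv⟩ := h.cornerInv_one_sub n hz
  have hQS := h.proj_mul_sum β n
  have hyQ := h.invariant n z
  have hQQ := h.proj_idem n
  set S := ∑ k ∈ Finset.range n, β k • (Q (k + 1) - Q k)
  set y := a - algebraMap ℂ A z
  have hfS : (1 - Q n) * S = 0 := by rw [sub_mul, hQS, one_mul, sub_self]
  have hyQ' : (1 - Q n) * y * Q n = 0 := by
    rw [sub_mul, sub_mul, one_mul, hyQ, sub_self]
  have hsum : Q n + (1 - Q n) = 1 := by abel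
  have hadd := CornerInv.add hu (hv.congr (y' := y - S) ?_) ?_ ?_ ?_
  · rw [hsum] at hadd
    exact hadd.isUnit
  · rw [mul_sub _ y S, hfS, sub_zero]
  · rw [mul_sub, mul_one, hQQ, sub_self]
  · rw [sub_mul, one_mul, hQQ, sub_self]
  · rw [mul_sub _ y S, hfS, sub_zero, hyQ']

end IsFlag
end Flag

/-! ### Range projections and diagonal elements in C⋆-algebras -/

section CStar
variable {A : Type*} [CStarAlgebra A]

/-- Kaplansky's formula for the range projection of an idempotent: the element
`1 + (p - p*) (p - p*)*` is invertible and commutes with `p` and `p*`, and `p p*` divided by it is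
the orthogonal projection with the same range as `p`. -/
theorem exists_rangeProj {p : A} (hp : p * p = p) :
    ∃ q : A, IsStarProjection q ∧ p * q = q ∧ q * p = p := by
  let _ : PartialOrder A := CStarAlgebra.spectralOrder A
  let _ : StarOrderedRing A := CStarAlgebra.spectralOrderedRing A
  have hp' : star p * star p = star p := by rw [← star_mul, hp]
  obtain ⟨h, hh⟩ : IsUnit (1 + (p - star p) * star (p - star p)) :=
    CStarAlgebra.isUnit_of_le 1 (le_add_of_nonneg_right (mul_star_self_nonneg _))
  have e : (h : A) = 1 - p - star p + p * star p + star p * p := by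
    rw [hh, star_sub, star_star, mul_sub, sub_mul, sub_mul, hp, hp']; abel
  have h1 : p * h = p * star p * p := by
    rw [e]; simp only [mul_add, mul_sub, ← mul_assoc, hp]; noncomm_ring
  have h2 : (h : A) * p = p * star p * p := by
    rw [e]; simp only [add_mul, sub_mul, mul_assoc, hp]; noncomm_ring
  have hs : star (h : A) = h := by
    rw [e]; simp only [star_add, star_sub, star_mul, star_star, star_one]; abel
  have hc : Commute p (h : A) := h1.trans h2.symm
  have hc' : Commute (star p) (h : A) := by
    have := hc.star_star
    rwa [hs] at this
  have hks : star (↑h⁻¹ : A) = ↑h⁻¹ := by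
    have : star h = h := Units.ext hs
    rw [← Units.coe_star_inv, this]
  have hk := hc.units_inv_right
  have hk' := hc'.units_inv_right
  have hqp : p * star p * ↑h⁻¹ * p = p := by
    rw [mul_assoc, ← hk.eq, ← mul_assoc, ← h1, mul_assoc, Units.mul_inv, mul_one]
  refine ⟨p * star p * ↑h⁻¹, ⟨?_, ?_⟩, ?_, hqp⟩
  · unfold IsIdempotentElem
    rw [← mul_assoc, ← mul_assoc, hqp]
  · unfold IsSelfAdjoint
    rw [star_mul, star_mul, star_star, hks, (hk.mul_left hk').eq]
  · rw [← mul_assoc, ← mul_assoc, hp]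

/-- A combination of mutually orthogonal projections is normal, with norm bounded by the largest
coefficient. -/
theorem normal_and_norm_le_of_proj {Q : ℕ → A} (hQ : ∀ k, IsStarProjection (Q k))
    (hQQ : ∀ k, Q k * Q (k + 1) = Q k) {α : ℕ → ℂ} {C : ℝ} (hC : 0 ≤ C) {m : ℕ}
    (hα : ∀ k < m, ‖α k‖ ≤ C) (S : A) (hS : S = ∑ k ∈ Finset.range m, α k • (Q (k + 1) - Q k)) :
    star S * S = S * star S ∧ ‖S‖ ≤ C := by
  let _ : PartialOrder A := CStarAlgebra.spectralOrder A
  let _ : StarOrderedRing A := CStarAlgebra.spectralOrderedRing A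
  have hQQ' : ∀ k, Q (k + 1) * Q k = Q k := fun k => by
    have := congrArg star (hQQ k)
    rwa [star_mul, (hQ k).isSelfAdjoint.star_eq, (hQ (k + 1)).isSelfAdjoint.star_eq] at this
  have hproj : ∀ k, IsStarProjection (Q (k + 1) - Q k) := fun k =>
    (hQ k).sub_of_mul_eq_left (hQ (k + 1)) (hQQ k)
  have key : Q m * S = S ∧ S * Q m = S ∧ star S * S = S * star S ∧
      star S * S ≤ (C ^ 2 : ℝ) • (Q m - Q 0) := by
    subst hS
    induction m with
    | zero => simp
    | succ m ih =>
      rw [Finset.sum_range_succ]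
      set S := ∑ k ∈ Finset.range m, α k • (Q (k + 1) - Q k)
      obtain ⟨i1, i2, i3, i4⟩ := ih fun k hk => hα k (by omega)
      have he := hproj m
      have hQm := (hQ m).isIdempotentElem.eq
      have hQm1 := (hQ (m + 1)).isIdempotentElem.eq
      have hQe : Q m * (Q (m + 1) - Q m) = 0 := by rw [mul_sub, hQQ, hQm, sub_self]
      have heQ : (Q (m + 1) - Q m) * Q m = 0 := by rw [sub_mul, hQQ', hQm, sub_self]
      have hQ'e : Q (m + 1) * (Q (m + 1) - Q m) = Q (m + 1) - Q m := by rw [mul_sub, hQm1, hQQ']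
      have heQ' : (Q (m + 1) - Q m) * Q (m + 1) = Q (m + 1) - Q m := by rw [sub_mul, hQm1, hQQ]
      have hQ'S : Q (m + 1) * S = S := by rw [← i1, ← mul_assoc, hQQ']
      have hSQ' : S * Q (m + 1) = S := by rw [← i2, mul_assoc, hQQ]
      have hsplit : Q (m + 1) - Q 0 = (Q m - Q 0) + (Q (m + 1) - Q m) := by abel
      rw [hsplit]
      set e := Q (m + 1) - Q m
      have hee : e * e = e := he.isIdempotentElem.eq
      have hes : star e = e := he.isSelfAdjoint.star_eq
      have heS : e * S = 0 := by rw [← i1, ← mul_assoc, heQ, zero_mul]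
      have hSe : S * e = 0 := by rw [← i2, mul_assoc, hQe, mul_zero]
      have heS' : e * star S = 0 := by
        have := congrArg star hSe
        rwa [star_mul, hes, star_zero] at this
      have hSe' : star S * e = 0 := by
        have := congrArg star heS
        rwa [star_mul, hes, star_zero] at this
      have hl : star (S + α m • e) * (S + α m • e) = star S * S + (‖α m‖ ^ 2 : ℝ) • e := by
        rw [star_add, star_smul, hes, add_mul, mul_add, mul_add, smul_mul_smul_comm, hee,
          mul_smul_comm, hSe', smul_mul_assoc, heS, smul_zero, smul_zero, add_zero, zero_add]
        congr 1
        rw [← Complex.coe_smul, RCLike.star_def, Complex.conj_mul']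
        norm_cast
      have hr : (S + α m • e) * star (S + α m • e) = S * star S + (‖α m‖ ^ 2 : ℝ) • e := by
        rw [star_add, star_smul, hes, add_mul, mul_add, mul_add, smul_mul_smul_comm, hee,
          mul_smul_comm, hSe, smul_mul_assoc, heS', smul_zero, smul_zero, add_zero, zero_add]
        congr 1
        rw [← Complex.coe_smul, RCLike.star_def, Complex.mul_conj']
        norm_cast
      refine ⟨?_, ?_, ?_, ?_⟩
      · rw [mul_add, hQ'S, mul_smul_comm, hQ'e]
      · rw [add_mul, hSQ', smul_mul_assoc, heQ']
      · rw [hl, hr, i3]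
      · rw [hl, smul_add]
        refine add_le_add i4 ?_
        have h0 : ‖α m‖ ^ 2 ≤ C ^ 2 := pow_le_pow_left₀ (norm_nonneg _) (hα m (by omega)) 2
        exact smul_le_smul_of_nonneg_right h0 he.nonneg
  obtain ⟨-, -, k3, k4⟩ := key
  refine ⟨k3, ?_⟩
  have hle : Q m - Q 0 ≤ 1 := by
    have h1 : Q m ≤ 1 := sub_nonneg.1 (hQ m).one_sub.nonneg
    exact (sub_le_self _ (hQ 0).nonneg).trans h1
  have h2 : star S * S ≤ algebraMap ℝ A (C ^ 2) := by
    rw [Algebra.algebraMap_eq_smul_one]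
    exact k4.trans (smul_le_smul_of_nonneg_left hle (by positivity))
  have h3 : ‖star S * S‖ ≤ C ^ 2 :=
    (CStarAlgebra.norm_le_iff_le_algebraMap _ (by positivity) (star_mul_self_nonneg S)).2 h2
  rw [CStarRing.norm_star_mul_self, ← sq] at h3
  exact le_of_sq_le_sq h3 hC

end CStar

/-! ### The decomposition -/

section Main
variable {A : Type*} [CStarAlgebra A]

/-- Commuting idempotents `p k` in the double commutant of `a` accumulate to an increasing sequence
`P k`, where `P (k + 1)` is the supremum of `P k` and `p k`. -/
theorem exists_isFlag {a : A} {p : ℕ → A} (hp : ∀ k, p k * p k = p k)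
    (hb : ∀ k, Bicommutes a (p k)) :
    ∃ P Q : ℕ → A, IsFlag a P Q ∧ (∀ k, IsStarProjection (Q k)) ∧
      ∀ k, P (k + 1) = P k + p k * (1 - P k) := by
  let P : ℕ → A := fun n => Nat.rec 0 (fun k x => x + p k * (1 - x)) n
  have hP0 : P 0 = 0 := rfl
  have hP : ∀ k, P (k + 1) = P k + p k * (1 - P k) := fun k => rfl
  clear_value P
  have hbic : ∀ k, Bicommutes a (P k) := by
    intro k
    induction k with
    | zero => intro y _; rw [hP0]; exact Commute.zero_right y
    | succ k ih =>
      intro y hy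
      rw [hP]
      exact (ih y hy).add_right ((hb k y hy).mul_right ((Commute.one_right y).sub_right (ih y hy)))
  have hsucc : ∀ k, P k * P k = P k → P (k + 1) * P k = P k := by
    intro k ih
    rw [hP, add_mul, ih, mul_assoc, sub_mul, ih, one_mul, sub_self, mul_zero, add_zero]
  have hidem : ∀ k, P k * P k = P k := by
    intro k
    induction k with
    | zero => rw [hP0, mul_zero]
    | succ k ih =>
      have h1 := hsucc k ih
      have hc : P (k + 1) * p k = p k := by
        rw [hP, add_mul, mul_assoc, sub_mul, one_mul, mul_sub, hp,
          ((hbic k).commute (hb k)).eq, ← mul_assoc, hp]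
        abel
      conv_lhs => rw [hP k, mul_add, ← hP k, h1, ← mul_assoc, hc]
      exact (hP k).symm
  choose Q hQ hPQ hQP using fun k => exists_rangeProj (hidem k)
  have hQ'Q : ∀ k, Q (k + 1) * Q k = Q k := by
    intro k
    rw [← hPQ k, ← mul_assoc, ← hsucc k (hidem k), ← mul_assoc, hQP]
  refine ⟨P, Q, ⟨hbic, hidem, hP0, fun k => hsucc k (hidem k), hPQ, hQP, fun k => ?_⟩, hQ, hP⟩
  have := congrArg star (hQ'Q k)
  rwa [star_mul, (hQ k).isSelfAdjoint.star_eq, (hQ (k + 1)).isSelfAdjoint.star_eq] at this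

/-- `P n` dominates `p j` for `j < n`. -/
theorem mul_eq_of_lt {a : A} {p P : ℕ → A} (hp : ∀ k, p k * p k = p k)
    (hb : ∀ k, Bicommutes a (p k)) (hP : ∀ k, P (k + 1) = P k + p k * (1 - P k)) {j n : ℕ}
    (hj : j < n) : p j * P n = p j := by
  induction n, hj using Nat.le_induction with
  | base => rw [hP, mul_add, ← mul_assoc, hp, mul_sub, mul_one]; abel
  | succ n hn ih =>
    rw [hP, mul_add, ih, ← mul_assoc, ((hb j).commute (hb n)).eq, mul_assoc, mul_sub, ih, mul_one,
      sub_self, mul_zero, add_zero]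

/-- The decomposition, with the Riesz property of `T` and the Browder condition spelled out at
single points. -/
theorem exists_decomposition {B : Type*} [NormedRing B] [NormedAlgebra ℂ B] [CompleteSpace B]
    [Nontrivial B] (T : A →ₐ[ℂ] B) (hT : Continuous T)
    (hRiesz : ∀ x : A, T x = 0 → ∀ w : ℂ, w ≠ 0 → w ∉ closure (spectrum ℂ x \ {w}))
    (a : A) {Ω : Set ℂ} (hΩ : Ω.Finite) (hσ : spectrum ℂ (T a) = Ω)
    (hβ : ∀ z, z ∉ Ω → ∃ c d : A,
      algebraMap ℂ A z - a = c + d ∧ T c = 0 ∧ IsUnit d ∧ c * d = d * c) :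
    ∃ d c : A, a = d + c ∧ T d = 0 ∧ star d * d = d * star d ∧ spectrum ℂ c = Ω := by
  have hiso : ∀ z, z ∉ Ω → ∃ ε > 0, ∀ s ∈ spectrum ℂ a, s ≠ z → ε < dist s z := by
    intro z hz
    obtain ⟨x, _, h, hTx, ⟨g, rfl⟩, hc⟩ := hβ z hz
    refine isolated_of_browder g hc h (hRiesz _ ?_ _ (by norm_num))
    rw [map_mul, hTx, zero_mul]
  have hne : Ω.Nonempty := hσ ▸ spectrum.nonempty (T a)
  obtain ⟨l, o, ho, hl, hlim⟩ := exists_enumeration (spectrum.isCompact a) hΩ hne hiso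
  -- `p k` is the spectral idempotent of `l k`, and zero for the superfluous `k` with `l k ∈ Ω`
  have hex : ∀ k, ∃ p : A, p * p = p ∧ Bicommutes a p ∧ T p = 0 ∧
      (∀ w, w ≠ l k ∨ l k ∈ Ω → ∃ u, Bicommutes a u ∧ (a - algebraMap ℂ A w) * u = p) ∧
      (l k ∉ Ω → ∃ u, Bicommutes a u ∧ (a - algebraMap ℂ A (l k)) * u = 1 - p) := by
    intro k
    by_cases hk : l k ∈ Ω
    · refine ⟨0, mul_zero _, fun y _ => Commute.zero_right y, map_zero T,
        fun w _ => ⟨0, fun y _ => Commute.zero_right y, mul_zero _⟩, fun h => absurd hk h⟩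
    · obtain ⟨ε, hε, hε'⟩ := hiso _ hk
      have hR := isRiesz_rieszProj hε hε'
      exact ⟨_, hR.idem, hR.bic, map_rieszProj_eq_zero T hT hε hε' (hσ ▸ hk),
        fun w hw => hR.inv_ne w (hw.resolve_right hk), fun _ => hR.inv_eq⟩
  choose p hp hpb hTp hpne hpeq using hex
  obtain ⟨P, Q, hF, hQ, hP⟩ := exists_isFlag hp hpb
  have hdiag : ∀ k w, w ≠ l k ∨ l k ∈ Ω →
      ∃ u, Bicommutes a u ∧ (a - algebraMap ℂ A w) * u = P (k + 1) - P k := by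
    intro k w hw
    obtain ⟨u, hu, hu'⟩ := hpne k w hw
    refine ⟨u * (1 - P k), fun y hy => (hu y hy).mul_right
      ((Commute.one_right y).sub_right (hF.bic k y hy)), ?_⟩
    rw [← mul_assoc, hu', hP]; abel
  have htail : ∀ z n, z ∉ Ω → (z ∈ spectrum ℂ a → ∃ j < n, l j = z) →
      ∃ u, Bicommutes a u ∧ (a - algebraMap ℂ A z) * u = 1 - P n := by
    intro z n hz h
    by_cases hza : z ∈ spectrum ℂ a
    · obtain ⟨j, hj, rfl⟩ := h hza
      obtain ⟨u, hu, hu'⟩ := hpeq j hz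
      refine ⟨u * (1 - P n), fun y hy => (hu y hy).mul_right
        ((Commute.one_right y).sub_right (hF.bic n y hy)), ?_⟩
      rw [← mul_assoc, hu', sub_mul, one_mul, mul_sub, mul_one, mul_eq_of_lt hp hpb hP hj, sub_self,
        sub_zero]
    · refine ⟨-resolvent a z * (1 - P n), fun y hy => ((commute_resolvent hy z).neg_right).mul_right
        ((Commute.one_right y).sub_right (hF.bic n y hy)), ?_⟩
      rw [← mul_assoc, mul_neg, ← neg_mul, neg_sub, sub_mul_resolvent a hza, one_mul]
  have hTQ : ∀ k, T (Q k) = 0 := by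
    have hTP : ∀ k, T (P k) = 0 := by
      intro k
      induction k with
      | zero => rw [hF.zero, map_zero]
      | succ k ih => rw [hP, map_add, map_mul, ih, hTp, zero_mul, add_zero]
    intro k
    rw [← hF.mul_proj, map_mul, hTP, zero_mul]
  -- subtracting `D n` from `a` moves `l k` to the nearby `o k ∈ Ω` for all `k < n`
  set α : ℕ → ℂ := fun k => l k - o k with hα
  set D : ℕ → A := fun n => ∑ k ∈ Finset.range n, α k • (Q (k + 1) - Q k) with hD
  have hTD : ∀ n, T (D n) = 0 := by
    intro n
    simp [hD, map_sum, map_smul, hTQ]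
  have hDnormal : ∀ n, star (D n) * D n = D n * star (D n) := by
    intro n
    refine (normal_and_norm_le_of_proj hQ hF.proj_mul_succ (α := α) (m := n)
      (C := ∑ k ∈ Finset.range n, ‖α k‖) (by positivity) (fun k hk => ?_) (D n) rfl).1
    exact Finset.single_le_sum (f := fun k => ‖α k‖) (fun i _ => norm_nonneg _)
      (Finset.mem_range.2 hk)
  have hDcauchy : CauchySeq D := by
    refine Metric.cauchySeq_iff'.2 fun ε hε => ?_
    obtain ⟨N, hN⟩ := hlim (ε / 2) (by positivity)
    refine ⟨N, fun n hn => ?_⟩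
    obtain ⟨m, rfl⟩ := Nat.exists_eq_add_of_le hn
    have h1 : D (N + m) - D N =
        ∑ k ∈ Finset.range m, α (N + k) • (Q (N + (k + 1)) - Q (N + k)) := by
      simp only [hD, Finset.sum_range_add, add_sub_cancel_left, add_assoc]
    have h2 := (normal_and_norm_le_of_proj (Q := fun k => Q (N + k)) (fun k => hQ _)
      (fun k => hF.proj_mul_succ (N + k)) (α := fun k => α (N + k)) (m := m)
      (C := ε / 2) (by positivity) (fun k _ => (hN _ (by omega)).le) _ h1).2
    rw [dist_eq_norm]
    linarith
  obtain ⟨d, hd⟩ := cauchySeq_tendsto_of_complete hDcauchy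
  have hTd : T d = 0 := by
    have h1 := (hT.tendsto d).comp hd
    exact tendsto_nhds_unique h1 (by simp [Function.comp_def, hTD])
  have hdn : star d * d = d * star d := by
    have h1 := hd.star.mul hd
    have h2 := hd.mul hd.star
    exact tendsto_nhds_unique h1 (h2.congr fun n => (hDnormal n).symm)
  refine ⟨d, a - d, by abel, hTd, hdn, Set.Subset.antisymm ?_ ?_⟩
  swap
  · have h1 := AlgHom.spectrum_apply_subset T (a - d)
    rwa [map_sub, hTd, sub_zero, hσ] at h1
  intro z hz
  by_contra hzΩ
  refine hz ?_
  -- the inclusion of the spectrum of `a - d` in `Ω`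
  obtain ⟨δ, hδ, hδ'⟩ : ∃ δ > 0, ∀ w ∈ Ω, δ ≤ ‖w - z‖ := by
    obtain ⟨δ, hδ, h⟩ := Metric.isOpen_iff.1 hΩ.isClosed.isOpen_compl z hzΩ
    refine ⟨δ, hδ, fun w hw => not_lt.1 fun hlt => h (a := w) ?_ hw⟩
    rwa [Metric.mem_ball, dist_eq_norm]
  obtain ⟨n0, hn0⟩ := hlim (δ / 4) (by positivity)
  -- beyond `n0` the `α k` are so small that a bounded multiple of them does not move `l k` to `z`
  have hltail : ∀ n ≥ n0, z ∈ spectrum ℂ a → ∃ j < n, l j = z := by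
    intro n hn hza
    obtain ⟨j, hj⟩ := hl z ⟨hza, hzΩ⟩
    refine ⟨j, ?_, hj⟩
    by_contra hjn
    have h1 := hn0 j (by omega)
    have h2 := hδ' _ (ho j)
    rw [hj, norm_sub_rev] at h1
    linarith
  have hlow : ∀ k, z + α k ≠ l k := by
    intro k h
    refine hzΩ ?_
    have : z = o k := by rw [← sub_eq_zero] at h ⊢; rw [← h]; simp only [hα]; ring
    rw [this]; exact ho k
  obtain ⟨G, hG⟩ : IsUnit (a - algebraMap ℂ A z - D n0) :=
    hF.isUnit_sub_sum n0 (fun k _ => hdiag k _ (Or.inl (hlow k)))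
      (htail z n0 hzΩ (hltail n0 le_rfl))
  have hTx : T (↑G⁻¹ * (d - D n0)) = 0 := by rw [map_mul, map_sub, hTd, hTD, sub_zero, mul_zero]
  obtain ⟨ε, hε, hε'⟩ := isolated_of_notMem_closure (hRiesz _ hTx 1 one_ne_zero)
  have hr : 0 < min (1 / 2) ε := by positivity
  -- `z - (a - d) = -G (1 - x)` with `x = G⁻¹ (d - D n0)` in the kernel of `T`, so that the Riesz
  -- property provides a circle around `1` in the resolvent set of `x`
  have h1 : (1 : ℂ) ∉ spectrum ℂ (↑G⁻¹ * (d - D n0)) := by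
    refine one_notMem_spectrum_of_approx hr ?_ ?_
    · intro s hs hsp
      have hs' : dist s 1 = min (1 / 2) ε := hs
      refine absurd (hε' s hsp ?_) (not_lt.2 (hs'.le.trans (min_le_right _ _)))
      rintro rfl
      rw [dist_self] at hs'
      linarith
    · intro η hη
      have hlimx : Filter.Tendsto (fun n => (↑G⁻¹ : A) * (D n - D n0)) Filter.atTop
          (nhds (↑G⁻¹ * (d - D n0))) := (hd.sub_const _).const_mul _
      obtain ⟨n, hn1, hn2⟩ :=
        ((Metric.tendsto_nhds.1 hlimx η hη).and (Filter.eventually_ge_atTop n0)).exists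
      rw [dist_eq_norm] at hn1
      refine ⟨_, hn1, fun s hs hsp => hsp ?_⟩
      have hs' : ‖s - 1‖ ≤ 1 / 2 := by
        rw [← dist_eq_norm]
        exact (Metric.mem_closedBall.1 hs).trans (min_le_left _ _)
      have hsn : 1 / 2 ≤ ‖s‖ := by
        have h2 := norm_sub_norm_le (1 : ℂ) s
        rw [norm_one, norm_sub_rev] at h2
        linarith
      have hs0 : s ≠ 0 := by
        rintro rfl
        rw [norm_zero] at hsn
        linarith
      have hsi : ‖s⁻¹‖ ≤ 2 := by
        rw [norm_inv]
        exact inv_le_of_inv_le₀ (by norm_num) (by linarith)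
      -- `s - G⁻¹ (D n - D n0)` is `s G⁻¹` times `a - z` minus the diagonal element with entries `β k`
      set β : ℕ → ℂ := fun k => if k < n0 then α k else s⁻¹ * α k with hβd
      have hβl : ∀ k, z + β k ≠ l k := by
        intro k
        by_cases hk : k < n0
        · simp only [hβd, hk, if_true]
          exact hlow k
        · simp only [hβd, hk, if_false]
          intro h
          have e1 : o k - z = s⁻¹ * α k - α k := by
            simp only [hα] at h ⊢
            linear_combination -h
          have e2 := hδ' _ (ho k)
          have e3 := norm_sub_le (s⁻¹ * α k) (α k)
          have e4 : ‖α k‖ < δ / 4 := hn0 k (by omega)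
          rw [norm_mul] at e3
          rw [e1] at e2
          nlinarith [norm_nonneg (α k)]
      have hU := hF.isUnit_sub_sum (z := z) (β := β) n (fun k _ => hdiag k _ (Or.inl (hβl k)))
        (htail z n hzΩ (hltail n hn2))
      have hsum : ∑ k ∈ Finset.range n, β k • (Q (k + 1) - Q k) = D n0 + s⁻¹ • (D n - D n0) := by
        obtain ⟨m, rfl⟩ := Nat.exists_eq_add_of_le hn2
        simp only [hD, Finset.sum_range_add, add_sub_cancel_left, Finset.smul_sum, smul_smul]
        congr 1
        · refine Finset.sum_congr rfl fun k hk => ?_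
          simp only [hβd, Finset.mem_range.1 hk, if_true]
        · refine Finset.sum_congr rfl fun k _ => ?_
          simp only [hβd, not_lt.2 (Nat.le_add_right n0 k), if_false]
      rw [hsum, ← sub_sub, ← hG] at hU
      have hfac : (G : A) * (algebraMap ℂ A s - ↑G⁻¹ * (D n - D n0)) =
          algebraMap ℂ A s * (G - s⁻¹ • (D n - D n0)) := by
        rw [mul_sub (G : A), mul_sub (algebraMap ℂ A s), Units.mul_inv_cancel_left,
          ← Algebra.smul_def s (s⁻¹ • _), smul_smul, mul_inv_cancel₀ hs0, one_smul,
          ← Algebra.commutes]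
      refine (Units.isUnit_units_mul G _).1 ?_
      rw [hfac]
      exact ((isUnit_iff_ne_zero.2 hs0).map (algebraMap ℂ A)).mul hU
  have h2 : IsUnit (algebraMap ℂ A 1 - ↑G⁻¹ * (d - D n0)) := Set.notMem_compl_iff.1 h1
  have h3 : algebraMap ℂ A z - (a - d) = -(G * (algebraMap ℂ A 1 - ↑G⁻¹ * (d - D n0))) := by
    rw [mul_sub, Units.mul_inv_cancel_left, map_one, mul_one, hG]; abel
  change IsUnit (algebraMap ℂ A z - (a - d))
  rw [h3]
  exact (G.isUnit.mul h2).neg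

end Main

/-- Decomposition of generalized `T`-Riesz elements: if `T` has the Riesz property
and `σ_T(a) = ω_T(a) = β_T(a) = Ω` for a finite set `Ω ⊆ ℂ`, then `a = d + c`
with `d` a normal element of `ker T` and `σ_A(c) = Ω`. -/
theorem generalized_tRiesz_decomposition
    {A B : Type*}
    [NormedRing A] [StarRing A] [CStarRing A] [NormedAlgebra ℂ A]
    [CompleteSpace A] [StarModule ℂ A] [Nontrivial A]
    [NormedRing B] [StarRing B] [CStarRing B] [NormedAlgebra ℂ B]
    [CompleteSpace B] [StarModule ℂ B] [Nontrivial B]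
    (T : A →ₐ[ℂ] B) (hTcont : Continuous T)
    (hRiesz : ∀ x : A, T x = 0 →
      {z : ℂ | z ∈ closure (spectrum ℂ x \ {z})} ⊆ {0})
    (a : A) (Ω : Set ℂ) (hΩ : Ω.Finite)
    (hσ : spectrum ℂ (T a) = Ω)
    (hω : {z : ℂ | ¬ ∃ c d : A,
      algebraMap ℂ A z - a = c + d ∧ T c = 0 ∧ IsUnit d} = Ω)
    (hβ : {z : ℂ | ¬ ∃ c d : A,
      algebraMap ℂ A z - a = c + d ∧ T c = 0 ∧ IsUnit d ∧ c * d = d * c} = Ω) :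
    ∃ d c : A, a = d + c ∧ T d = 0 ∧ star d * d = d * star d ∧
      spectrum ℂ c = Ω := by
  let _ : CStarAlgebra A := {}
  refine exists_decomposition T hTcont (fun x hx w hw hmem => hw (hRiesz x hx hmem)) a hΩ hσ ?_
  intro z hz
  by_contra hcon
  exact hz (hβ.subset hcon)
end

section
/- Let A and B be unital complex Banach algebras and T : A → B a continuous unital algebra homomorphism. Let a ∈ A and let P ∈ ℂ[X] be a nonzero polynomial such that P(a) is T-Riesz (σ_B(T (P(a))) ⊆ {0}) and P has no zero in σ_A(a) \ {0} (i.e. every root of P lying in σ_A(a) equals 0). Then a is T-Riesz, i.e. σ_B(T a) ⊆ {0}. -/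
/-- If `P(a)` is `T`-Riesz for a nonzero polynomial `P` whose only possible root
in `σ_A(a)` is `0`, then `a` is `T`-Riesz. -/
theorem tRiesz_of_polyTRiesz_no_nonzero_root
    {A B : Type*}
    [NormedRing A] [NormedAlgebra ℂ A] [CompleteSpace A] [Nontrivial A]
    [NormedRing B] [NormedAlgebra ℂ B] [CompleteSpace B] [Nontrivial B]
    (T : A →ₐ[ℂ] B) (hTcont : Continuous T)
    (a : A) (P : Polynomial ℂ) (hP : P ≠ 0)
    (hPa : spectrum ℂ (T (Polynomial.aeval a P)) ⊆ {0})
    (hroots : ∀ z ∈ spectrum ℂ a, Polynomial.eval z P = 0 → z = 0) :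
    spectrum ℂ (T a) ⊆ {0} := by
  intro z hz
  -- Homomorphisms shrink spectra, so `z` is in the spectrum of `a`, where `hroots` applies.
  refine hroots z (AlgHom.spectrum_apply_subset T a hz) ?_
  -- By the easy half of spectral mapping in `B`, `P(z)` is in the spectrum of `P(T a) = T (P(a))`.
  have h := spectrum.subset_polynomial_aeval (T a) P ⟨z, hz, rfl⟩
  rw [Polynomial.aeval_algHom_apply] at h
  exact hPa h
end

section
/- Let A and B be unital complex C*-algebras and T : A → B a continuous unital algebra homomorphism satisfying the Riesz property. Suppose a ∈ A satisfies σ_T(a) = ω_T(a) = β_T(a) = {0} (so a is T-Riesz with one-point T-spectra). Then a = d + c with T d = 0, d normal (d* · d = d · d*), and c quasinilpotent (σ_A(c) = {0}). -/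
/-!
The result is a C⋆-algebraic West decomposition with respect to the ideal `I = ker T`, of which only
the following is used: `I` is a proper closed two-sided ideal whose elements have spectra without
nonzero accumulation points, and `z - a` is an element of `I` plus an invertible for all `z ≠ 0`.

*Fredholm alternative* (`IsRieszIdeal.exists_right`, `IsRieszIdeal.exists_left`). Spectral
projections of self-adjoint elements of `I` away from `0` exist and lie in `I`. Hence a
non-invertible `1 + k`, `k ∈ I`, has nonzero left and right annihilating projections in `I`, and each
nonzero spectral point of an element `x ≡ a` modulo `I` has left and right eigenprojections in `I`.

*Triangularisation* (`IsWeylAwayFromZero.exists_seq`). Starting with `Q₀ = 0`, choose a spectral point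
`zₙ` of maximal modulus of the compression `(1 - Qₙ) a (1 - Qₙ)` and an eigenprojection
`qₙ ≤ 1 - Qₙ` for it, and put `Qₙ₊₁ = Qₙ + qₙ`. The `Qₙ` are increasing and invariant under `a`, with
diagonal blocks `qₙ a qₙ = zₙ qₙ`.

*Convergence.* The class of `a` in `A / I` is quasinilpotent, so for every `ε > 0` some power `aᵐ` is
within less than `εᵐ` of `I` (`exists_pow_near_ideal`). Orthogonal projections satisfy `qₙ i → 0` for
`i ∈ I` (`IsRieszIdeal.tendsto_mul`), by decomposition into minimal projections. As
`qₙ aᵐ qₙ = zₙᵐ qₙ`, this gives `zₙ → 0`, so `d = ∑ zₙ qₙ` converges in norm; it is normal and in `I`.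

*Quasinilpotence of `c = a - d`.* Let `w ≠ 0` be in the spectrum of `c`. As `c ≡ a` modulo `I`, there
is a projection `f ≠ 0` with `f c = w f`. Since `c` is strictly triangular along the `Qₙ`, all
`f Qₙ` vanish, hence `f d = 0` and `f a = w f`, and `w` is a left eigenvalue of every compression
`(1 - Qₙ) a (1 - Qₙ)`. By maximality `|w| ≤ |zₙ| → 0`, a contradiction.
-/
open Filter Topology

/-! ### The quotient by a closed two-sided ideal -/

/-- If `a` is quasinilpotent modulo `I`, its powers are close to `I`. This is the spectral radius
formula in the quotient Banach algebra `A ⧸ I`, whose norm structure is set up here since the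
library only provides it for commutative rings. -/
theorem exists_pow_near_ideal {A : Type*} [NormedRing A] [NormedAlgebra ℂ A] [CompleteSpace A]
    (I : Ideal A) [I.IsTwoSided] (hI : IsClosed (I : Set A)) (hI1 : (1 : A) ∉ I) (a : A)
    (ha : ∀ z : ℂ, z ≠ 0 → ∃ c d : A, algebraMap ℂ A z - a = c + d ∧ c ∈ I ∧ IsUnit d)
    {ε : ℝ} (hε : 0 < ε) : ∃ m : ℕ, ∃ i ∈ I, ‖a ^ m - i‖ < ε ^ m := by
  have : IsClosed (I : Set A) := hI
  let _ : NormedRing (A ⧸ I) :=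
    { Submodule.Quotient.normedAddCommGroup I, Ideal.Quotient.ring I with
      norm_mul_le := fun x y => by
        refine le_of_forall_pos_le_add fun ε hε => ?_
        have := ((Metric.nhds_basis_ball.prod_nhds Metric.nhds_basis_ball).tendsto_iff
          Metric.nhds_basis_ball).mp (continuous_mul.tendsto (‖x‖, ‖y‖)) ε hε
        simp only [Set.mem_prod, Metric.mem_ball, and_imp, Prod.forall, Prod.exists] at this
        obtain ⟨ε₁, ε₂, ⟨h₁, h₂⟩, h⟩ := this
        obtain ⟨a, rfl, ha⟩ := Submodule.Quotient.norm_mk_lt x h₁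
        obtain ⟨b, rfl, hb⟩ := Submodule.Quotient.norm_mk_lt y h₂
        simp only [dist, abs_sub_lt_iff] at h
        specialize h ‖a‖ ‖b‖
          ⟨by linarith, by linarith [Submodule.Quotient.norm_mk_le I a]⟩
          ⟨by linarith, by linarith [Submodule.Quotient.norm_mk_le I b]⟩
        calc
          _ ≤ ‖a‖ * ‖b‖ := (Submodule.Quotient.norm_mk_le I (a * b)).trans (norm_mul_le a b)
          _ ≤ _ := (sub_lt_iff_lt_add'.mp h.1).le }
  let _ : NormedAlgebra ℂ (A ⧸ I) :=
    { Submodule.Quotient.normedSpace I ℂ, Ideal.Quotient.algebra ℂ with }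
  have : CompleteSpace (A ⧸ I) := Submodule.Quotient.completeSpace I
  let π : A →ₐ[ℂ] A ⧸ I := Ideal.Quotient.mkₐ ℂ I
  have : Nontrivial (A ⧸ I) := Ideal.Quotient.nontrivial_iff.2 (fun h => hI1 (h ▸ trivial))
  have hsp : spectralRadius ℂ (π a) = 0 := by
    refine le_antisymm (iSup₂_le fun z hz => ?_) bot_le
    by_cases hz0 : z = 0
    · simp [hz0]
    · exfalso
      obtain ⟨c, d, h, hc, hd⟩ := ha z hz0
      apply hz
      have h2 := congrArg π h
      have h3 : π c = 0 := Ideal.Quotient.eq_zero_iff_mem.2 hc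
      rw [map_sub, map_add, h3, zero_add, AlgHom.commutes] at h2
      change IsUnit _
      rw [h2]
      exact hd.map π
  have hlim := spectrum.pow_nnnorm_pow_one_div_tendsto_nhds_spectralRadius (π a)
  rw [hsp] at hlim
  have hε' : (0 : ENNReal) < ENNReal.ofReal ε := by simpa using hε
  obtain ⟨m, hm, hm0⟩ := ((hlim.eventually (gt_mem_nhds hε')).and (eventually_gt_atTop 0)).exists
  have hlt : ‖π a ^ m‖ < ε ^ m := by
    have h1 : (‖π a ^ m‖₊ : ENNReal) < ENNReal.ofReal ε ^ m := by
      have := ENNReal.pow_lt_pow_left hm0.ne' hm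
      rwa [← ENNReal.rpow_natCast, ← ENNReal.rpow_mul, one_div,
        inv_mul_cancel₀ (by exact_mod_cast hm0.ne'), ENNReal.rpow_one] at this
    rw [← ENNReal.ofReal_pow hε.le] at h1
    have h2 : ENNReal.ofReal ‖π a ^ m‖ < ENNReal.ofReal (ε ^ m) := by
      rwa [ofReal_norm]
    exact (ENNReal.ofReal_lt_ofReal_iff_of_nonneg (norm_nonneg _)).1 h2
  obtain ⟨s, hs, hs2⟩ := Submodule.Quotient.norm_mk_lt (π a ^ m) (sub_pos.2 hlt)
  refine ⟨m, a ^ m - s, ?_, ?_⟩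
  · rw [← Ideal.Quotient.eq_zero_iff_mem]
    have : π (a ^ m - s) = 0 := by
      rw [map_sub, map_pow, sub_eq_zero]; exact hs.symm
    exact this
  · simpa using hs2

/-! ### Riesz ideals and their spectral projections -/

/-- A proper closed left ideal `I` such that `0` is the only possible accumulation point of the
spectrum of an element of `I` (such ideals are also called inessential). Below `I` is usually
two-sided. -/
structure IsRieszIdeal {A : Type*} [CStarAlgebra A] (I : Ideal A) : Prop where
  isClosed : IsClosed (I : Set A)
  one_notMem : (1 : A) ∉ I
  eq_zero_of_acc : ∀ x ∈ I, ∀ z ∈ closure (spectrum ℂ x \ {z}), z = 0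

/-- The spectral projection of a normal element `x` for the set `S`, as the continuous functional
calculus of the indicator function of `S`; it is meaningful when that function is continuous on the
spectrum, and is `0` otherwise. -/
noncomputable def specProj {A : Type*} [CStarAlgebra A] (x : A) (S : Set ℂ) : A :=
  cfc (S.indicator (1 : ℂ → ℂ)) x

section
variable {A : Type*} [CStarAlgebra A] {I : Ideal A} [I.IsTwoSided]

omit [I.IsTwoSided] in
/-- Nonzero spectral points are isolated, so a function vanishing near `0` is continuous on the
spectrum. -/
theorem IsRieszIdeal.continuousOn (hI : IsRieszIdeal I) {x : A} (hx : x ∈ I) {g : ℂ → ℂ}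
    (hg : g =ᶠ[𝓝 0] 0) : ContinuousOn g (spectrum ℂ x) := by
  intro z _
  by_cases hz : z = 0
  · subst hz
    exact (continuousAt_const.congr hg.symm).continuousWithinAt
  · rw [← continuousWithinAt_sdiff_self, ContinuousWithinAt,
      notMem_closure_iff_nhdsWithin_eq_bot.1 (fun h => hz (hI.eq_zero_of_acc x hx z h))]
    exact tendsto_bot

theorem IsRieszIdeal.cfc_mem (hI : IsRieszIdeal I) {x : A} (hx : x ∈ I) [IsStarNormal x]
    {g : ℂ → ℂ} (hg : g =ᶠ[𝓝 0] 0) : cfc g x ∈ I := by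
  have hg' : (fun t => t⁻¹ * g t) =ᶠ[𝓝 0] 0 := by
    filter_upwards [hg] with t ht
    simp [ht]
  have h : cfc g x = x * cfc (fun t => t⁻¹ * g t) x := by
    conv_rhs => enter [1]; rw [← cfc_id' ℂ x]
    rw [← cfc_mul _ _ x (by fun_prop) (hI.continuousOn hx hg')]
    refine cfc_congr fun t _ => ?_
    by_cases ht : t = 0
    · simpa [ht] using hg.self_of_nhds
    · simp [ht]
  rw [h]
  exact I.mul_mem_right _ hx

theorem indicator_eventually {S : Set ℂ} (hS : Sᶜ ∈ 𝓝 0) :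
    S.indicator (1 : ℂ → ℂ) =ᶠ[𝓝 0] 0 := by
  filter_upwards [hS] with t ht
  simp only [Set.indicator, Pi.zero_apply]
  exact if_neg ht

theorem IsRieszIdeal.specProj_mem (hI : IsRieszIdeal I) {x : A} (hx : x ∈ I) [IsStarNormal x]
    {S : Set ℂ} (hS : Sᶜ ∈ 𝓝 0) : specProj x S ∈ I :=
  hI.cfc_mem hx (indicator_eventually hS)

omit [I.IsTwoSided] in
theorem IsRieszIdeal.specProj_isStarProjection (hI : IsRieszIdeal I) {x : A} (hx : x ∈ I)
    {S : Set ℂ} (hS : Sᶜ ∈ 𝓝 0) : IsStarProjection (specProj x S) := by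
  have hc := hI.continuousOn hx (indicator_eventually hS)
  constructor
  · rw [IsIdempotentElem, specProj, ← cfc_mul _ _ x hc hc]
    refine cfc_congr fun t _ => ?_
    by_cases ht : t ∈ S <;> simp [ht]
  · rw [IsSelfAdjoint, specProj, ← cfc_star]
    refine cfc_congr fun t _ => ?_
    by_cases ht : t ∈ S <;> simp [ht]

omit [I.IsTwoSided] in
theorem IsRieszIdeal.specProj_ne_zero (hI : IsRieszIdeal I) {x : A} (hx : x ∈ I)
    [IsStarNormal x] {S : Set ℂ} (hS : Sᶜ ∈ 𝓝 0) {z : ℂ} (hz : z ∈ spectrum ℂ x) (hzS : z ∈ S) :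
    specProj x S ≠ 0 := by
  intro h
  have : Nontrivial A := ⟨1, 0, fun h => hI.one_notMem (h ▸ I.zero_mem)⟩
  have h1 : (1 : ℂ) ∈ spectrum ℂ (specProj x S) := by
    rw [specProj, cfc_map_spectrum _ x (hf := hI.continuousOn hx (indicator_eventually hS))]
    exact ⟨z, hz, by simp [hzS]⟩
  rw [h] at h1
  simp at h1

theorem compl_singleton_mem {z : ℂ} (hz : z ≠ 0) : ({z} : Set ℂ)ᶜ ∈ 𝓝 (0 : ℂ) :=
  isOpen_compl_singleton.mem_nhds hz.symm

omit [I.IsTwoSided] in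
theorem IsRieszIdeal.mul_specProj_singleton (hI : IsRieszIdeal I) {x : A} (hx : x ∈ I)
    [IsStarNormal x] {z : ℂ} (hz : z ≠ 0) : x * specProj x {z} = z • specProj x {z} := by
  have hc := hI.continuousOn hx (indicator_eventually (compl_singleton_mem hz))
  rw [specProj]
  conv_lhs => enter [1]; rw [← cfc_id' ℂ x]
  rw [← cfc_mul _ _ x (by fun_prop) hc, ← cfc_smul z _ x hc]
  refine cfc_congr fun t _ => ?_
  by_cases ht : t = z <;> simp [ht]

theorem IsStarProjection.norm_le_one {A : Type*} [CStarAlgebra A] {e : A} (he : IsStarProjection e) : ‖e‖ ≤ 1 :=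
  IsStarProjection.norm_le e he

/-- Projections in `I` act as approximate left units on `I`: take the spectral projection `e` of
`k k⋆` for `|t| ≥ η`, so that `‖(1 - e) k‖² = ‖(1 - e) k k⋆ (1 - e)‖ ≤ η`. -/
theorem IsRieszIdeal.exists_proj_near (hI : IsRieszIdeal I) {k : A} (hk : k ∈ I) {δ : ℝ}
    (hδ : 0 < δ) : ∃ e ∈ I, IsStarProjection e ∧ ‖k - e * k‖ < δ := by
  set h := k * star k with hh
  have hhI : h ∈ I := I.mul_mem_right _ hk
  have hsa : IsSelfAdjoint h := IsSelfAdjoint.mul_star_self k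
  have hn : IsStarNormal h := hsa.isStarNormal
  set η : ℝ := (δ / 2) ^ 2
  have hη : 0 < η := by positivity
  set S : Set ℂ := {t | η ≤ ‖t‖}
  have hS : Sᶜ ∈ 𝓝 (0 : ℂ) := by
    have : Sᶜ = Metric.ball 0 η := by ext; simp [S]
    rw [this]; exact Metric.ball_mem_nhds _ hη
  have hc := hI.continuousOn hhI (indicator_eventually hS)
  have hp := hI.specProj_isStarProjection hhI hS
  refine ⟨specProj h S, hI.specProj_mem hhI hS, hp, ?_⟩
  set e := specProj h S with he
  have h1 : ‖(1 - e) * h‖ ≤ η := by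
    have : (1 - e) * h = cfc (fun t => (1 - S.indicator (1 : ℂ → ℂ) t) * t) h := by
      rw [cfc_mul (fun t => 1 - S.indicator (1 : ℂ → ℂ) t) (fun t => t) h
        (continuousOn_const.sub hc) (by fun_prop), cfc_id' ℂ h,
        cfc_sub (fun _ => 1) (S.indicator (1 : ℂ → ℂ)) h continuousOn_const hc, cfc_const_one ℂ h]
      rfl
    rw [this]
    refine norm_cfc_le hη.le fun t _ => ?_
    by_cases ht : t ∈ S
    · simp [ht, hη.le]
    · have ht' : ‖t‖ < η := by simpa [S] using ht
      simpa [ht] using ht'.le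
  have h2 : (1 - e) * h * (1 - e) = ((1 - e) * k) * star ((1 - e) * k) := by
    simp [hh, hp.isSelfAdjoint.star_eq, mul_assoc]
  have h3 : ‖(1 - e) * k‖ ^ 2 ≤ (δ / 2) ^ 2 := by
    rw [sq, ← CStarRing.norm_self_mul_star, ← h2]
    calc _ ≤ ‖(1 - e) * h‖ * ‖1 - e‖ := norm_mul_le _ _
      _ ≤ η * 1 := by gcongr; exact hp.one_sub.norm_le_one
      _ = _ := mul_one _
  have h4 : ‖(1 - e) * k‖ ≤ δ / 2 := (sq_le_sq₀ (norm_nonneg _) (by positivity)).1 h3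
  have h5 : k - e * k = (1 - e) * k := by noncomm_ring
  rw [h5]; linarith

theorem IsRieszIdeal.star_mem (hI : IsRieszIdeal I) {k : A} (hk : k ∈ I) : star k ∈ I := by
  have : star k ∈ closure (I : Set A) := by
    refine Metric.mem_closure_iff.2 fun δ hδ => ?_
    obtain ⟨e, he, hp, hlt⟩ := hI.exists_proj_near hk hδ
    refine ⟨star k * e, I.mul_mem_left _ he, ?_⟩
    rw [dist_eq_norm, ← norm_star]
    simpa [hp.isSelfAdjoint.star_eq] using hlt
  rwa [hI.isClosed.closure_eq] at this

/-! ### Fredholm alternative -/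

/-- Fredholm alternative: a non-invertible `u = 1 + k` with `k ∈ I` is annihilated on the right by a
nonzero projection in `I`. If `u⋆u` is not invertible, use its spectral projection at `0`.
Otherwise `u` is left invertible; since `0` is not an accumulation point of the spectrum of `u`, the
elements `u - t` are invertible for small `t ≠ 0`, and this makes `u` invertible. -/
theorem IsRieszIdeal.exists_right (hI : IsRieszIdeal I) {k : A} (hk : k ∈ I)
    (hu : ¬ IsUnit (1 + k)) :
    ∃ f ∈ I, IsStarProjection f ∧ f ≠ 0 ∧ (1 + k) * f = 0 := by
  set u := 1 + k with hudef
  set j := k + star k + star k * k with hj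
  have hsk := hI.star_mem hk
  have hjI : j ∈ I := I.add_mem (I.add_mem hk hsk) (I.mul_mem_left _ hk)
  have huu : star u * u = 1 + j := by simp only [hudef, hj, star_add, star_one]; noncomm_ring
  have hjs : IsSelfAdjoint j := by
    rw [IsSelfAdjoint, hj]; simp [add_comm]
  have hjn : IsStarNormal j := hjs.isStarNormal
  by_cases hs : (-1 : ℂ) ∈ spectrum ℂ j
  · have h0 := compl_singleton_mem (z := (-1 : ℂ)) (by simp)
    refine ⟨specProj j {-1}, hI.specProj_mem hjI h0, hI.specProj_isStarProjection hjI h0,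
      hI.specProj_ne_zero hjI h0 hs rfl, ?_⟩
    set f := specProj j {-1} with hf
    have hjf : j * f = (-1 : ℂ) • f := hI.mul_specProj_singleton hjI (by simp)
    rw [← CStarRing.star_mul_self_eq_zero_iff, star_mul, mul_assoc, ← mul_assoc (star u), huu,
      add_mul, hjf]
    simp
  · exfalso
    have hinv : IsUnit (star u * u) := by
      rw [spectrum.notMem_iff] at hs
      rw [huu]
      have : algebraMap ℂ A (-1) - j = -(1 + j) := by simp; abel
      rwa [this, IsUnit.neg_iff] at hs
    obtain ⟨v, hv⟩ := hinv
    set y : A := ↑v⁻¹ * star u with hy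
    have hyu : y * u = 1 := by rw [hy, mul_assoc, ← hv]; simp
    have hacc : (-1 : ℂ) ∉ closure (spectrum ℂ k \ {-1}) := fun h => by
      simpa using hI.eq_zero_of_acc k hk _ h
    -- `y (u - t) = 1 - t y` is invertible for small `t`, hence so is `y`.
    have hev : ∀ᶠ t : ℂ in 𝓝[≠] 0, IsUnit (u - algebraMap ℂ A t) := by
      have h1 : ∀ᶠ t : ℂ in 𝓝 0, -1 + t ∉ spectrum ℂ k \ {-1} := by
        have hcont : Tendsto (fun t : ℂ => -1 + t) (𝓝 0) (𝓝 (-1)) := by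
          have : Continuous (fun t : ℂ => -1 + t) := by fun_prop
          simpa using this.tendsto 0
        have := hcont.eventually (isClosed_closure.isOpen_compl.mem_nhds hacc)
        exact this.mono fun t ht h => ht (subset_closure h)
      filter_upwards [h1.filter_mono nhdsWithin_le_nhds, self_mem_nhdsWithin] with t ht ht0
      have h2 : -1 + t ∉ spectrum ℂ k := fun h => ht ⟨h, by simpa using ht0⟩
      rw [spectrum.notMem_iff] at h2
      have : algebraMap ℂ A (-1 + t) - k = -(u - algebraMap ℂ A t) := by
        simp [hudef]; abel
      rwa [this, IsUnit.neg_iff] at h2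
    have hev2 : ∀ᶠ t : ℂ in 𝓝[≠] 0, IsUnit (1 - y * algebraMap ℂ A t) := by
      have hcont : Continuous (fun t : ℂ => 1 - y * algebraMap ℂ A t) := by
        have := continuous_algebraMap ℂ A
        fun_prop
      have := hcont.tendsto 0
      simp only [map_zero, mul_zero, sub_zero] at this
      exact (this.eventually (Units.isOpen.mem_nhds isUnit_one)).filter_mono nhdsWithin_le_nhds
    obtain ⟨t, ht1, ht2⟩ := (hev.and hev2).exists
    have hyt : y * (u - algebraMap ℂ A t) = 1 - y * algebraMap ℂ A t := by
      rw [mul_sub, hyu]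
    have hyunit : IsUnit y := by
      obtain ⟨w, hw⟩ := ht1
      rw [← hyt, ← hw] at ht2
      simpa using ht2
    apply hu
    obtain ⟨w, hw⟩ := hyunit
    have : u = ↑w⁻¹ := by
      rw [← hw] at hyu
      exact (Units.inv_eq_of_mul_eq_one_right hyu).symm ▸ rfl
    rw [this]; exact Units.isUnit _

theorem IsRieszIdeal.exists_left (hI : IsRieszIdeal I) {k : A} (hk : k ∈ I)
    (hu : ¬ IsUnit (1 + k)) :
    ∃ f ∈ I, IsStarProjection f ∧ f ≠ 0 ∧ f * (1 + k) = 0 := by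
  have h1 : ¬ IsUnit (1 + star k) := by
    have : 1 + star k = star (1 + k) := by simp
    rwa [this, isUnit_star]
  obtain ⟨f, hf, hp, h0, h⟩ := hI.exists_right (hI.star_mem hk) h1
  refine ⟨f, hf, hp, h0, ?_⟩
  have := congrArg star h
  simpa [hp.isSelfAdjoint.star_eq] using this
/-! ### Orthogonal sequences of projections -/

theorem mem_spectrum_of_mul_eq {A : Type*} [CStarAlgebra A] {x r : A} {z : ℂ} (hr : r ≠ 0)
    (h : x * r = z • r) : z ∈ spectrum ℂ x := by
  intro hu
  apply hr
  have hu' : IsUnit (algebraMap ℂ A z - x) := hu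
  rw [← hu'.mul_right_eq_zero, sub_mul, h, Algebra.algebraMap_eq_smul_one, smul_mul_assoc, one_mul,
    sub_self]

theorem mem_spectrum_of_mul_eq' {A : Type*} [CStarAlgebra A] {x r : A} {z : ℂ} (hr : r ≠ 0)
    (h : r * x = z • r) : z ∈ spectrum ℂ x := by
  intro hu
  apply hr
  have hu' : IsUnit (algebraMap ℂ A z - x) := hu
  rw [← hu'.mul_left_eq_zero, mul_sub, h, Algebra.algebraMap_eq_smul_one, mul_smul_comm, mul_one,
    sub_self]

omit [I.IsTwoSided] in
/-- The projections of a Riesz ideal satisfy the descending chain condition: for a strictly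
decreasing chain `fₙ`, the element `f₀ + ∑ 2⁻ⁿ (fₙ - fₙ₊₁)` of `I` has the eigenvalues `1 + 2⁻ⁿ`,
which accumulate at `1`. -/
theorem IsRieszIdeal.no_descending (hI : IsRieszIdeal I) (f : ℕ → A) (hfI : ∀ n, f n ∈ I)
    (hp : ∀ n, IsStarProjection (f n)) (hle : ∀ n, f n * f (n + 1) = f (n + 1))
    (hne : ∀ n, f (n + 1) ≠ f n) : False := by
  have hmono : ∀ m k, f m * f (m + k) = f (m + k) := by
    intro m k
    induction k with
    | zero => exact (hp m).isIdempotentElem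
    | succ k ih => rw [← add_assoc, ← hle (m + k), ← mul_assoc, ih]
  have hmono' : ∀ m k, f (m + k) * f m = f (m + k) := by
    intro m k
    have := congrArg star (hmono m k)
    simpa [(hp m).isSelfAdjoint.star_eq, (hp (m + k)).isSelfAdjoint.star_eq] using this
  have hle1 : ∀ {m n}, m ≤ n → f m * f n = f n := fun {m n} h => by
    obtain ⟨k, rfl⟩ := Nat.exists_eq_add_of_le h; exact hmono m k
  have hle2 : ∀ {m n}, m ≤ n → f n * f m = f n := fun {m n} h => by
    obtain ⟨k, rfl⟩ := Nat.exists_eq_add_of_le h; exact hmono' m k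
  set r : ℕ → A := fun n => f n - f (n + 1) with hr
  have hrp : ∀ n, IsStarProjection (r n) := fun n =>
    (hp (n + 1)).sub_of_mul_eq_right (hp n) (hle n)
  have horth : ∀ m n, n ≠ m → r n * r m = 0 := by
    intro m n hnm
    simp only [hr]
    rcases lt_or_gt_of_ne hnm with h | h
    · rw [sub_mul, mul_sub, mul_sub, hle1 h.le, hle1 (by omega), hle1 (by omega),
        hle1 (by omega)]
      simp
    · rw [sub_mul, mul_sub, mul_sub, hle2 h.le, hle2 (by omega), hle2 (by omega),
        hle2 (by omega)]
      simp
  have hsum : Summable (fun n : ℕ => ((1 / 2 : ℂ) ^ n) • r n) := by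
    refine Summable.of_norm_bounded (g := fun n : ℕ => (1 / 2 : ℝ) ^ n)
      (summable_geometric_of_lt_one (by norm_num) (by norm_num)) fun n => ?_
    rw [norm_smul]
    calc _ ≤ ‖(1 / 2 : ℂ) ^ n‖ * 1 := by gcongr; exact (hrp n).norm_le_one
      _ = _ := by simp
  obtain ⟨s, hs⟩ := hsum
  have hsI : s ∈ I := by
    refine hI.isClosed.mem_of_tendsto hs.tendsto_sum_nat (Eventually.of_forall fun N => ?_)
    exact I.sum_mem fun n _ =>
      Submodule.smul_of_tower_mem I _ (I.sub_mem (hfI n) (hfI (n + 1)))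
  have hsr : ∀ m, s * r m = ((1 / 2 : ℂ) ^ m) • r m := by
    intro m
    have h1 := hs.mul_right (r m)
    have h2 : HasSum (fun n => ((1 / 2 : ℂ) ^ n) • r n * r m) (((1 / 2 : ℂ) ^ m) • r m * r m) :=
      hasSum_single m fun n hn => by rw [smul_mul_assoc, horth m n hn, smul_zero]
    rw [h1.unique h2, smul_mul_assoc, (hrp m).isIdempotentElem]
  have hmem : ∀ m : ℕ, (1 + (1 / 2 : ℂ) ^ m) ∈ spectrum ℂ (f 0 + s) := by
    intro m
    refine mem_spectrum_of_mul_eq (r := r m) (sub_ne_zero.2 (hne m).symm) ?_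
    rw [add_mul, hsr, add_smul, one_smul]
    congr 1
    simp only [hr]
    rw [mul_sub, hle1 (Nat.zero_le _), hle1 (Nat.zero_le _)]
  have hlim : Tendsto (fun m : ℕ => 1 + (1 / 2 : ℂ) ^ m) atTop (𝓝 1) := by
    have := (tendsto_pow_atTop_nhds_zero_of_norm_lt_one (x := (1 / 2 : ℂ)) (by norm_num)).const_add
      (1 : ℂ)
    simpa using this
  have := hI.eq_zero_of_acc _ (I.add_mem (hfI 0) hsI) 1
    (mem_closure_of_tendsto hlim (Eventually.of_forall fun m => ⟨hmem m, by simp⟩))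
  exact one_ne_zero this

/-- Orthogonal projections `qₙ` tend to zero on every projection `e` of a Riesz ideal. By the
descending chain condition one may assume the claim for all proper subprojections of `e`; if `e`
splits, the claim adds up, and if `e` is minimal, then `e qₙ e = tₙ e` with `∑ tₙ ≤ 1`. -/
theorem IsRieszIdeal.tendsto_mul_proj (hI : IsRieszIdeal I) {q : ℕ → A}
    (hq : ∀ n, IsStarProjection (q n)) (hqq : ∀ m n, m ≠ n → q m * q n = 0) {e : A} (he : e ∈ I)
    (hep : IsStarProjection e) : Tendsto (fun n => ‖q n * e‖) atTop (𝓝 0) := by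
  let R : {p : A // p ∈ I ∧ IsStarProjection p} → {p : A // p ∈ I ∧ IsStarProjection p} → Prop :=
    fun f e => e.1 * f.1 = f.1 ∧ f.1 ≠ e.1
  have hwf : WellFounded R := by
    refine wellFounded_iff_isEmpty_descending_chain.2 ⟨fun f => ?_⟩
    exact hI.no_descending (fun n => (f.1 n).1) (fun n => (f.1 n).2.1) (fun n => (f.1 n).2.2)
      (fun n => (f.2 n).1) (fun n => (f.2 n).2)
  suffices H : ∀ e : {p : A // p ∈ I ∧ IsStarProjection p},
      Tendsto (fun n => ‖q n * e.1‖) atTop (𝓝 0) from H ⟨e, he, hep⟩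
  clear he hep e
  intro e
  induction e using hwf.induction with
  | _ e ih =>
  obtain ⟨e, he, hep⟩ := e
  simp only [R, Subtype.forall, and_imp] at ih ⊢
  by_cases hdec : ∃ f ∈ I, IsStarProjection f ∧ e * f = f ∧ f ≠ e ∧ f ≠ 0
  · obtain ⟨f, hf, hfp, hef, hfe, hf0⟩ := hdec
    have h1 := ih f hf hfp hef hfe
    have h2 := ih (e - f) (I.sub_mem he hf) (hfp.sub_of_mul_eq_right hep hef)
      (by rw [mul_sub, hef, hep.isIdempotentElem]) (by simpa using hf0)
    refine squeeze_zero (fun _ => norm_nonneg _) (fun n => ?_) (by simpa using h1.add h2)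
    calc ‖q n * e‖ = ‖q n * f + q n * (e - f)‖ := by congr 1; noncomm_ring
      _ ≤ _ := norm_add_le _ _
  · push Not at hdec
    by_cases he0 : e = 0
    · simp [he0]
    have hstar : ∀ n, star (q n * e) * (q n * e) = e * q n * e := fun n => by
      rw [star_mul, (hq n).isSelfAdjoint.star_eq, hep.isSelfAdjoint.star_eq, mul_assoc,
        ← mul_assoc (q n), (hq n).isIdempotentElem, mul_assoc]
    -- A nonzero spectral projection of `e qₙ e` is a subprojection of `e`, hence equals `e`.
    have hkey : ∀ n, e * q n * e = ((‖q n * e‖ ^ 2 : ℝ) : ℂ) • e := by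
      intro n
      set x := e * q n * e with hx
      have hnorm : ‖q n * e‖ ^ 2 = ‖x‖ := by rw [sq, ← CStarRing.norm_star_mul_self, hstar]
      rw [hnorm]
      have hxI : x ∈ I := I.mul_mem_left _ he
      have hsa : IsSelfAdjoint x := by rw [hx, ← hstar]; exact IsSelfAdjoint.star_mul_self _
      have hxn : IsStarNormal x := hsa.isStarNormal
      by_cases hx0 : x = 0
      · simp [hx0]
      have hz : (‖x‖ : ℂ) ≠ 0 := by simpa using hx0
      have hspec : (‖x‖ : ℂ) ∈ spectrum ℂ x := by
        have : Nontrivial A := ⟨e, 0, he0⟩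
        let _ := CStarAlgebra.spectralOrder A
        have := CStarAlgebra.spectralOrderedRing A
        have h0 : 0 ≤ x := by rw [hx, ← hstar]; exact star_mul_self_nonneg _
        have h1 := CStarAlgebra.norm_mem_spectrum_of_nonneg h0
        exact (spectrum.algebraMap_mem_iff ℂ (r := ‖x‖)).2 h1
      have hS := compl_singleton_mem hz
      set f := specProj x {(‖x‖ : ℂ)} with hf
      have hxf : x * f = (‖x‖ : ℂ) • f := hI.mul_specProj_singleton hxI hz
      have hf0 : f ≠ 0 := hI.specProj_ne_zero hxI hS hspec rfl
      have hfp : IsStarProjection f := hI.specProj_isStarProjection hxI hS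
      have hef : e * f = f := by
        have h1 : f = (‖x‖ : ℂ)⁻¹ • (x * f) := by rw [hxf, smul_smul, inv_mul_cancel₀ hz, one_smul]
        have hex : e * x = x := by
          rw [hx, ← mul_assoc, ← mul_assoc, hep.isIdempotentElem]
        rw [h1, mul_smul_comm, ← mul_assoc, hex]
      have hfe : f = e := by
        by_contra hne
        exact hf0 (hdec f (hI.specProj_mem hxI hS) hfp hef hne)
      rw [← hfe, ← hxf, hfe, hx, mul_assoc _ e e, hep.isIdempotentElem]
    have hsump : ∀ N, IsStarProjection (∑ n ∈ Finset.range N, q n) := by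
      intro N
      induction N with
      | zero => simp
      | succ N ihN =>
        rw [Finset.sum_range_succ]
        refine ihN.add (hq N) ?_
        rw [Finset.sum_mul]
        exact Finset.sum_eq_zero fun n hn => hqq _ _ (Finset.mem_range.1 hn).ne
    have hnorme : 0 < ‖e‖ := norm_pos_iff.2 he0
    have hsum : Summable (fun n => ‖q n * e‖ ^ 2) := by
      refine summable_of_sum_range_le (c := 1) (fun n => by positivity) fun N => ?_
      have h1 : ((∑ n ∈ Finset.range N, ‖q n * e‖ ^ 2 : ℝ) : ℂ) • e
          = e * (∑ n ∈ Finset.range N, q n) * e := by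
        rw [Finset.mul_sum, Finset.sum_mul, Complex.ofReal_sum, Finset.sum_smul]
        exact Finset.sum_congr rfl fun n _ => (hkey n).symm
      have h2 := congrArg norm h1
      rw [norm_smul, Complex.norm_real, Real.norm_of_nonneg (by positivity)] at h2
      have h3 : ‖e * (∑ n ∈ Finset.range N, q n) * e‖ ≤ 1 * ‖e‖ := by
        calc _ ≤ ‖e‖ * ‖∑ n ∈ Finset.range N, q n‖ * ‖e‖ := norm_mul₃_le
          _ ≤ 1 * 1 * ‖e‖ := by
            gcongr
            exacts [hep.norm_le_one, (hsump N).norm_le_one]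
          _ = _ := by ring
      exact le_of_mul_le_mul_right (h2 ▸ h3) hnorme
    have := hsum.tendsto_atTop_zero
    have h4 := (Real.continuous_sqrt.tendsto 0).comp this
    simpa [Function.comp_def, Real.sqrt_sq] using h4

theorem IsRieszIdeal.tendsto_mul (hI : IsRieszIdeal I) {q : ℕ → A}
    (hq : ∀ n, IsStarProjection (q n)) (hqq : ∀ m n, m ≠ n → q m * q n = 0) {i : A}
    (hi : i ∈ I) : Tendsto (fun n => ‖q n * i‖) atTop (𝓝 0) := by
  refine Metric.tendsto_atTop'.2 fun δ hδ => ?_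
  obtain ⟨e, he, hep, hlt⟩ := hI.exists_proj_near hi (half_pos hδ)
  have h1 := (hI.tendsto_mul_proj hq hqq he hep).mul_const ‖i‖
  rw [zero_mul] at h1
  obtain ⟨N, hN⟩ := (h1.eventually (gt_mem_nhds (half_pos hδ))).exists_forall_of_atTop
  refine ⟨N, fun n hn => ?_⟩
  rw [dist_zero_right, norm_norm]
  calc ‖q n * i‖ = ‖q n * e * i + q n * (i - e * i)‖ := by congr 1; noncomm_ring
    _ ≤ ‖q n * e‖ * ‖i‖ + ‖q n‖ * ‖i - e * i‖ :=
      (norm_add_le _ _).trans (add_le_add (norm_mul_le _ _) (norm_mul_le _ _))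
    _ ≤ ‖q n * e‖ * ‖i‖ + 1 * ‖i - e * i‖ := by gcongr; exact (hq n).norm_le_one
    _ < δ := by linarith [hN n hn.le]

/-! ### Norm-convergent diagonal sums -/

/-- `‖∑ zₙ qₙ‖ ≤ sup |zₙ|` for pairwise orthogonal projections: with `x = ∑ zₙ qₙ`, the element
`x⋆x = ∑ |zₙ|² qₙ` lies below `ε²` times the projection `∑ qₙ`. -/
theorem norm_sum_smul_proj_le {A : Type*} [CStarAlgebra A] {q : ℕ → A} {z : ℕ → ℂ}
    (hq : ∀ n, IsStarProjection (q n)) (hqq : ∀ m n, m ≠ n → q m * q n = 0) {ε : ℝ} (hε : 0 ≤ ε)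
    (s : Finset ℕ) (hz : ∀ n ∈ s, ‖z n‖ ≤ ε) : ‖∑ n ∈ s, z n • q n‖ ≤ ε := by
  let _ := CStarAlgebra.spectralOrder A
  have := CStarAlgebra.spectralOrderedRing A
  have hP : IsStarProjection (∑ n ∈ s, q n) := by
    induction s using Finset.induction_on with
    | empty => simp
    | insert a s ha ih =>
      rw [Finset.sum_insert ha]
      refine (hq a).add (ih fun n hn => hz n (Finset.mem_insert_of_mem hn)) ?_
      rw [Finset.mul_sum]
      exact Finset.sum_eq_zero fun n hn => hqq _ _ fun h => ha (h ▸ hn)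
  have hxx : star (∑ n ∈ s, z n • q n) * (∑ n ∈ s, z n • q n) = ∑ n ∈ s, (‖z n‖ ^ 2 : ℝ) • q n := by
    rw [star_sum, Finset.sum_mul]
    refine Finset.sum_congr rfl fun n hn => ?_
    rw [Finset.mul_sum, Finset.sum_eq_single n]
    · rw [star_smul, (hq n).isSelfAdjoint.star_eq, smul_mul_smul_comm, (hq n).isIdempotentElem,
        Complex.star_def, Complex.conj_mul']
      norm_cast
    · intro m _ hm
      rw [star_smul, (hq n).isSelfAdjoint.star_eq, smul_mul_smul_comm, hqq n m hm.symm, smul_zero]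
    · exact fun h => absurd hn h
  have hle : ‖∑ n ∈ s, (‖z n‖ ^ 2 : ℝ) • q n‖ ≤ ‖(ε ^ 2) • ∑ n ∈ s, q n‖ := by
    refine CStarAlgebra.norm_le_norm_of_nonneg_of_le
      (Finset.sum_nonneg fun n _ => smul_nonneg (by positivity) (hq n).nonneg) ?_
    rw [Finset.smul_sum]
    refine Finset.sum_le_sum fun n hn => smul_le_smul_of_nonneg_right ?_ (hq n).nonneg
    have := hz n hn
    gcongr
  rw [← hxx, CStarRing.norm_star_mul_self, norm_smul] at hle
  have h1 : ‖∑ n ∈ s, z n • q n‖ ^ 2 ≤ ε ^ 2 := by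
    rw [sq]
    calc _ ≤ _ := hle
      _ ≤ ‖ε ^ 2‖ * 1 := by gcongr; exact hP.norm_le_one
      _ = ε ^ 2 := by simp
  exact (sq_le_sq₀ (norm_nonneg _) hε).1 h1

theorem summable_smul_proj {A : Type*} [CStarAlgebra A] {q : ℕ → A} {z : ℕ → ℂ}
    (hq : ∀ n, IsStarProjection (q n)) (hqq : ∀ m n, m ≠ n → q m * q n = 0)
    (hz : Tendsto z atTop (𝓝 0)) : Summable (fun n => z n • q n) := by
  refine summable_iff_vanishing_norm.2 fun ε hε => ?_
  obtain ⟨N, hN⟩ := Metric.tendsto_atTop.1 hz (ε / 2) (half_pos hε)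
  refine ⟨Finset.range N, fun t ht => ?_⟩
  refine lt_of_le_of_lt (norm_sum_smul_proj_le hq hqq (half_pos hε).le t fun n hn => ?_)
    (half_lt_self hε)
  have : N ≤ n := by
    by_contra h
    exact Finset.disjoint_left.1 ht hn (Finset.mem_range.2 (not_le.1 h))
  simpa using (hN n this).le

/-! ### Eigenprojections at nonzero spectral points -/

/-- Every `z - a` with `z ≠ 0` is an element of `I` plus an invertible. This property depends only
on the class of `a` modulo `I`. -/
def IsWeylAwayFromZero (I : Ideal A) (a : A) : Prop :=
  ∀ z : ℂ, z ≠ 0 → ∃ c d : A, algebraMap ℂ A z - a = c + d ∧ c ∈ I ∧ IsUnit d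

/-- A nonzero spectral point of any `x ≡ a` modulo `I` is an eigenvalue with an eigenprojection
in `I`: write `z - x = D (1 + k)` with `D` invertible and `k ∈ I`, and use the Fredholm alternative
for `1 + k`. -/
theorem IsWeylAwayFromZero.exists_right {a x : A} (ha : IsWeylAwayFromZero I a)
    (hI : IsRieszIdeal I) (hx : a - x ∈ I) {z : ℂ} (hz : z ≠ 0) (hzx : z ∈ spectrum ℂ x) :
    ∃ f ∈ I, IsStarProjection f ∧ f ≠ 0 ∧ x * f = z • f := by
  obtain ⟨c, _, h, hc, D, rfl⟩ := ha z hz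
  have hk : ↑D⁻¹ * (c + (a - x)) ∈ I := I.mul_mem_left _ (I.add_mem hc hx)
  have hfac : algebraMap ℂ A z - x = D * (1 + ↑D⁻¹ * (c + (a - x))) := by
    rw [mul_add, mul_one, D.mul_inv_cancel_left]
    rw [sub_eq_iff_eq_add] at h
    rw [h]; abel
  obtain ⟨f, hf, hp, h0, hf1⟩ := hI.exists_right hk fun hu => hzx (by
    change IsUnit _
    rw [hfac]; exact D.isUnit.mul hu)
  refine ⟨f, hf, hp, h0, ?_⟩
  have h1 : (algebraMap ℂ A z - x) * f = 0 := by rw [hfac, mul_assoc, hf1, mul_zero]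
  rw [sub_mul, sub_eq_zero, Algebra.algebraMap_eq_smul_one, smul_mul_assoc, one_mul] at h1
  exact h1.symm

/-- Left counterpart of `IsWeylAwayFromZero.exists_right`, from `z - x = (1 + k) D`. -/
theorem IsWeylAwayFromZero.exists_left {a x : A} (ha : IsWeylAwayFromZero I a)
    (hI : IsRieszIdeal I) (hx : a - x ∈ I) {z : ℂ} (hz : z ≠ 0) (hzx : z ∈ spectrum ℂ x) :
    ∃ f ∈ I, IsStarProjection f ∧ f ≠ 0 ∧ f * x = z • f := by
  obtain ⟨c, _, h, hc, D, rfl⟩ := ha z hz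
  have hk : (c + (a - x)) * ↑D⁻¹ ∈ I := I.mul_mem_right _ (I.add_mem hc hx)
  have hfac : algebraMap ℂ A z - x = (1 + (c + (a - x)) * ↑D⁻¹) * D := by
    rw [add_mul, one_mul, D.inv_mul_cancel_right]
    rw [sub_eq_iff_eq_add] at h
    rw [h]; abel
  obtain ⟨f, hf, hp, h0, hf1⟩ := hI.exists_left hk fun hu => hzx (by
    change IsUnit _
    rw [hfac]; exact hu.mul D.isUnit)
  refine ⟨f, hf, hp, h0, ?_⟩
  have h1 : f * (algebraMap ℂ A z - x) = 0 := by rw [hfac, ← mul_assoc, hf1, zero_mul]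
  rw [mul_sub, sub_eq_zero, Algebra.algebraMap_eq_smul_one, mul_smul_comm, mul_one] at h1
  exact h1.symm

/-! ### Greedy triangularisation -/

/-- `Q` is a self-adjoint projection in `I` whose range is invariant under `a`. -/
structure IsInvProj (I : Ideal A) (a Q : A) : Prop where
  proj : IsStarProjection Q
  mem : Q ∈ I
  inv : Q * a * Q = a * Q

/-- One step of the triangularisation: `q` is a projection in `I` orthogonal to `Q` that is an
eigenprojection, with eigenvalue `z`, of the compression `(1 - Q) a (1 - Q)`, and `|z|` is the
spectral radius of that compression. When the spectral radius vanishes, `q = 0` and `z = 0` are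
allowed, so that the construction never terminates. -/
structure IsStep (I : Ideal A) (a Q q : A) (z : ℂ) : Prop where
  proj : IsStarProjection q
  mem : q ∈ I
  orth : Q * q = 0
  eig : (1 - Q) * a * q = z • q
  max : ∀ w ∈ spectrum ℂ ((1 - Q) * a * (1 - Q)), ‖w‖ ≤ ‖z‖
  ne : z ≠ 0 → q ≠ 0

theorem IsWeylAwayFromZero.exists_step {a Q : A} (ha : IsWeylAwayFromZero I a)
    (hI : IsRieszIdeal I) (hQ : IsInvProj I a Q) : ∃ q z, IsStep I a Q q z := by
  have : Nontrivial A := ⟨1, 0, fun h => hI.one_notMem (h ▸ I.zero_mem)⟩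
  set b := (1 - Q) * a * (1 - Q) with hb
  obtain ⟨z, hz, hzr⟩ := spectrum.exists_nnnorm_eq_spectralRadius b
  have hmax : ∀ w ∈ spectrum ℂ b, ‖w‖ ≤ ‖z‖ := by
    intro w hw
    have h1 : (‖w‖₊ : ENNReal) ≤ ‖z‖₊ := by
      rw [hzr]
      exact le_iSup₂ (f := fun (k : ℂ) (_ : k ∈ spectrum ℂ b) => (‖k‖₊ : ENNReal)) w hw
    exact_mod_cast h1
  by_cases hz0 : z = 0
  · exact ⟨0, z, by simp, I.zero_mem, by simp, by simp, hmax, fun h => absurd hz0 h⟩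
  have hab : a - b ∈ I := by
    have : a - b = Q * a + (a - Q * a) * Q := by rw [hb]; noncomm_ring
    rw [this]
    exact I.add_mem (I.mul_mem_right _ hQ.mem) (I.mul_mem_left _ hQ.mem)
  obtain ⟨q, hqI, hq, hq0, hbq⟩ := ha.exists_right hI hab hz0 hz
  have hQq : Q * q = 0 := by
    have h1 : Q * (b * q) = 0 := by
      rw [hb, ← mul_assoc, ← mul_assoc, ← mul_assoc, hQ.proj.mul_one_sub_self]
      simp
    rw [hbq, mul_smul_comm] at h1
    exact (smul_eq_zero.1 h1).resolve_left hz0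
  refine ⟨q, z, hq, hqI, hQq, ?_, hmax, fun _ => hq0⟩
  rw [← hbq, hb, mul_assoc _ (1 - Q) q, sub_mul 1 Q q, hQq, one_mul, sub_zero]

omit [I.IsTwoSided] in
/-- Adjoining the eigenprojection of a step keeps the range invariant. -/
theorem IsStep.add {a Q q : A} {z : ℂ} (h : IsStep I a Q q z) (hQ : IsInvProj I a Q) :
    IsInvProj I a (Q + q) := by
  refine ⟨hQ.proj.add h.proj h.orth, I.add_mem hQ.mem h.mem, ?_⟩
  have hqQ : q * Q = 0 := by
    simpa [h.proj.isSelfAdjoint.star_eq, hQ.proj.isSelfAdjoint.star_eq] using congrArg star h.orth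
  have e1 : a * q = z • q + Q * a * q := by
    rw [← h.eig]; noncomm_ring
  have e2 : q * a * Q = 0 := by
    rw [mul_assoc, ← hQ.inv, ← mul_assoc, ← mul_assoc, hqQ]; simp
  have e3 : q * a * q = z • q := by
    rw [mul_assoc, e1, mul_add, ← mul_assoc, ← mul_assoc, hqQ, mul_smul_comm,
      h.proj.isIdempotentElem]
    simp
  calc (Q + q) * a * (Q + q) = Q * a * Q + q * a * Q + q * a * q + Q * a * q := by noncomm_ring
    _ = a * Q + a * q := by rw [e1, e2, e3, hQ.inv]; abel
    _ = _ := by rw [mul_add]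

theorem IsWeylAwayFromZero.exists_seq {a : A} (ha : IsWeylAwayFromZero I a)
    (hI : IsRieszIdeal I) : ∃ (Q q : ℕ → A) (z : ℕ → ℂ), Q 0 = 0 ∧
      (∀ n, Q (n + 1) = Q n + q n) ∧ (∀ n, IsInvProj I a (Q n)) ∧
      ∀ n, IsStep I a (Q n) (q n) (z n) := by
  choose q z h using fun Q : {Q // IsInvProj I a Q} => ha.exists_step hI Q.2
  let S : ℕ → {Q // IsInvProj I a Q} := fun n =>
    Nat.rec ⟨0, by simp, I.zero_mem, by simp⟩ (fun _ Q => ⟨Q.1 + q Q, (h Q).add Q.2⟩) n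
  exact ⟨fun n => (S n).1, fun n => q (S n), fun n => z (S n), rfl, fun n => rfl,
    fun n => (S n).2, fun n => h (S n)⟩

/-- The West decomposition relative to a Riesz ideal: the diagonal `d = ∑ zₙ qₙ` of the greedy
triangularisation of `a` is normal and lies in `I`, and `a - d` is quasinilpotent. -/
theorem west_decomposition {a : A} (hI : IsRieszIdeal I) (ha : IsWeylAwayFromZero I a) :
    ∃ d c : A, a = d + c ∧ d ∈ I ∧ star d * d = d * star d ∧ spectrum ℂ c = {0} := by
  obtain ⟨Q, q, z, hQ0, hQs, hQ, hq⟩ := ha.exists_seq hI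
  have hqQ : ∀ n, q n * Q n = 0 := fun n => by
    simpa [(hq n).proj.isSelfAdjoint.star_eq, (hQ n).proj.isSelfAdjoint.star_eq]
      using congrArg star (hq n).orth
  have hQq : ∀ i j, i < j → Q j * q i = q i := by
    intro i j hij
    induction j, hij using Nat.le_induction with
    | base => rw [hQs, add_mul, (hq i).orth, (hq i).proj.isIdempotentElem, zero_add]
    | succ j hj ih =>
      rw [hQs, add_mul, ih]
      nth_rewrite 2 [← ih]
      rw [← mul_assoc, hqQ, zero_mul, add_zero]
  have horth1 : ∀ i j, i < j → q j * q i = 0 := fun i j hij => by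
    rw [← hQq i j hij, ← mul_assoc, hqQ, zero_mul]
  have hp := fun n => (hq n).proj
  have horth : ∀ i j, i ≠ j → q i * q j = 0 := by
    intro i j hij
    rcases lt_or_gt_of_ne hij with h | h
    · simpa [(hp i).isSelfAdjoint.star_eq, (hp j).isSelfAdjoint.star_eq]
        using congrArg star (horth1 i j h)
    · exact horth1 j i h
  have haq : ∀ n, a * q n = z n • q n + Q n * a * q n := fun n => by
    rw [← (hq n).eig]; noncomm_ring
  have hqaQ : ∀ n, q n * a * Q (n + 1) = z n • q n := by
    intro n
    have e1 : q n * a * Q n = 0 := by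
      rw [mul_assoc, ← (hQ n).inv, ← mul_assoc, ← mul_assoc, hqQ]; simp
    rw [hQs, mul_add, e1, zero_add, mul_assoc, haq, mul_add, ← mul_assoc, ← mul_assoc, hqQ,
      mul_smul_comm, (hp n).isIdempotentElem]
    simp
  have hqpow : ∀ n m : ℕ, q n * a ^ m * Q (n + 1) = (z n) ^ m • q n := by
    intro n m
    induction m with
    | zero =>
      rw [pow_zero, mul_one, pow_zero, one_smul, hQs, mul_add, hqQ, (hp n).isIdempotentElem,
        zero_add]
    | succ m ih =>
      rw [pow_succ, mul_assoc, mul_assoc, ← (hQ (n + 1)).inv, ← mul_assoc, ← mul_assoc,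
        ← mul_assoc, ih, smul_mul_assoc, smul_mul_assoc, hqaQ, smul_smul, pow_succ]
  -- `qₙ aᵐ qₙ = zₙᵐ qₙ`, while `aᵐ` is within less than `εᵐ` of some `i ∈ I` and `qₙ i → 0`; hence
  -- `|zₙ| ≥ ε` fails for large `n`.
  have hz : Tendsto z atTop (𝓝 0) := by
    refine Metric.tendsto_atTop.2 fun ε hε => ?_
    obtain ⟨m, i, hi, hlt⟩ := exists_pow_near_ideal I hI.isClosed hI.one_notMem a ha hε
    obtain ⟨N, hN⟩ := ((hI.tendsto_mul hp horth hi).eventually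
      (gt_mem_nhds (sub_pos.2 hlt))).exists_forall_of_atTop
    refine ⟨N, fun n hn => ?_⟩
    rw [dist_zero_right]
    by_contra hge
    rw [not_lt] at hge
    have hz0 : z n ≠ 0 := norm_pos_iff.1 (hε.trans_le hge)
    have hqn : 0 < ‖q n‖ := norm_pos_iff.2 ((hq n).ne hz0)
    have hq1 : q n * a ^ m * q n = (z n) ^ m • q n := by
      have := congrArg (· * q n) (hqpow n m)
      simpa only [mul_assoc, hQq n (n + 1) n.lt_succ_self, smul_mul_assoc,
        (hp n).isIdempotentElem.eq] using this
    have hb : ‖q n * a ^ m * q n‖ ≤ (‖q n * i‖ + ‖a ^ m - i‖) * ‖q n‖ := by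
      calc ‖q n * a ^ m * q n‖ ≤ ‖q n * a ^ m‖ * ‖q n‖ := norm_mul_le _ _
        _ = ‖q n * i + q n * (a ^ m - i)‖ * ‖q n‖ := by congr 2; noncomm_ring
        _ ≤ (‖q n * i‖ + ‖q n‖ * ‖a ^ m - i‖) * ‖q n‖ := by
          gcongr
          exact (norm_add_le _ _).trans (add_le_add le_rfl (norm_mul_le _ _))
        _ ≤ (‖q n * i‖ + 1 * ‖a ^ m - i‖) * ‖q n‖ := by
          gcongr; exact (hp n).norm_le_one
        _ = _ := by rw [one_mul]
    rw [hq1, norm_smul, norm_pow] at hb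
    have h1 := le_of_mul_le_mul_right hb hqn
    have h2 : ε ^ m ≤ ‖z n‖ ^ m := by gcongr
    linarith [hN n hn]
  obtain ⟨d, hd⟩ := summable_smul_proj hp horth hz
  have hdq : ∀ n, d * q n = z n • q n := by
    intro n
    have h2 : HasSum (fun k => z k • q k * q n) (z n • q n * q n) :=
      hasSum_single n fun k hk => by rw [smul_mul_assoc, horth k n hk, smul_zero]
    rw [(hd.mul_right (q n)).unique h2, smul_mul_assoc, (hp n).isIdempotentElem]
  have hqd : ∀ n, q n * d = z n • q n := by
    intro n
    have h2 : HasSum (fun k => q n * z k • q k) (q n * z n • q n) :=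
      hasSum_single n fun k hk => by rw [mul_smul_comm, horth n k hk.symm, smul_zero]
    rw [(hd.mul_left (q n)).unique h2, mul_smul_comm, (hp n).isIdempotentElem]
  have hdI : d ∈ I := hI.isClosed.mem_of_tendsto hd.tendsto_sum_nat
    (Eventually.of_forall fun N => I.sum_mem fun n _ => Submodule.smul_of_tower_mem I _ (hq n).mem)
  have hsd : HasSum (fun n => star (z n) • q n) (star d) := by
    simpa [(hp _).isSelfAdjoint.star_eq] using hd.star
  refine ⟨d, a - d, by abel, hdI, ?_, ?_⟩
  · have h1 := hsd.mul_right d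
    have h2 := hsd.mul_left d
    simp only [smul_mul_assoc, mul_smul_comm, hqd, hdq] at h1 h2
    exact h1.unique h2
  · have : Nontrivial A := ⟨1, 0, fun h => hI.one_notMem (h ▸ I.zero_mem)⟩
    refine (Set.Nonempty.subset_singleton_iff (spectrum.nonempty (a - d))).1 fun w hw => ?_
    by_contra hw0
    have hw0 : w ≠ 0 := hw0
    obtain ⟨f, -, -, hf0, hf⟩ := ha.exists_left hI (x := a - d) (by simpa using hdI) hw0 hw
    -- `c = a - d` maps the range of `qₙ` into that of `Qₙ`, so `f c = w f` with `w ≠ 0` forces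
    -- `f Qₙ = 0` by induction.
    have hfQ : ∀ n, f * Q n = 0 := by
      intro n
      induction n with
      | zero => rw [hQ0, mul_zero]
      | succ n ih =>
        have h1 : f * (a - d) * q n = 0 := by
          rw [mul_assoc, sub_mul, haq, hdq, add_sub_cancel_left, ← mul_assoc, ← mul_assoc, ih]
          simp
        rw [hf, smul_mul_assoc] at h1
        rw [hQs, mul_add, ih, (smul_eq_zero.1 h1).resolve_left hw0, add_zero]
    have hfq : ∀ n, f * q n = 0 := fun n => by
      rw [← hQq n (n + 1) n.lt_succ_self, ← mul_assoc, hfQ, zero_mul]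
    have hfd : f * d = 0 := by
      have h1 := hd.mul_left f
      simp only [mul_smul_comm, hfq, smul_zero] at h1
      exact h1.unique hasSum_zero
    have hfa : f * a = w • f := by rw [← hf, mul_sub, hfd, sub_zero]
    -- `f` is also a left eigenprojection of every compression `(1 - Qₙ) a (1 - Qₙ)`, whose
    -- spectral radius is `|zₙ|`.
    have hle : ∀ n, ‖w‖ ≤ ‖z n‖ := fun n => by
      refine (hq n).max w (mem_spectrum_of_mul_eq' hf0 ?_)
      have h1 : f * (1 - Q n) = f := by rw [mul_sub, hfQ, mul_one, sub_zero]
      rw [← mul_assoc, ← mul_assoc, h1, hfa, smul_mul_assoc, h1]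
    have := ge_of_tendsto' hz.norm hle
    rw [norm_zero] at this
    exact hw0 (norm_le_zero_iff.1 this)
end

theorem tRiesz_one_point_spectra_decomposition
    {A B : Type*}
    [NormedRing A] [StarRing A] [CStarRing A] [NormedAlgebra ℂ A]
    [CompleteSpace A] [StarModule ℂ A] [Nontrivial A]
    [NormedRing B] [StarRing B] [CStarRing B] [NormedAlgebra ℂ B]
    [CompleteSpace B] [StarModule ℂ B] [Nontrivial B]
    (T : A →ₐ[ℂ] B) (hTcont : Continuous T)
    (hRiesz : ∀ x : A, T x = 0 →
      {z : ℂ | z ∈ closure (spectrum ℂ x \ {z})} ⊆ {0})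
    (a : A)
    (hσ : spectrum ℂ (T a) = {0})
    (hω : {z : ℂ | ¬ ∃ c d : A,
      algebraMap ℂ A z - a = c + d ∧ T c = 0 ∧ IsUnit d} = {0})
    (hβ : {z : ℂ | ¬ ∃ c d : A,
      algebraMap ℂ A z - a = c + d ∧ T c = 0 ∧ IsUnit d ∧ c * d = d * c} = {0}) :
    ∃ d c : A, a = d + c ∧ T d = 0 ∧ star d * d = d * star d ∧
      spectrum ℂ c = {0} := by
  let _ : CStarAlgebra A := {}
  set I : Ideal A := RingHom.ker T with hIdef
  have hmem : ∀ x, x ∈ I ↔ T x = 0 := fun x => RingHom.mem_ker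
  have hI : IsRieszIdeal I :=
    { isClosed := by
        have : (I : Set A) = T ⁻¹' {0} := by ext x; simp [hmem]
        rw [this]
        exact isClosed_singleton.preimage hTcont
      one_notMem := by simp [hmem]
      eq_zero_of_acc := fun x hx z hz => hRiesz x ((hmem x).1 hx) hz }
  have ha : IsWeylAwayFromZero I a := by
    intro z hz
    by_contra h
    have hmz : z ∈ {z : ℂ | ¬ ∃ c d : A,
        algebraMap ℂ A z - a = c + d ∧ T c = 0 ∧ IsUnit d} := by
      simpa only [Set.mem_ofPred_eq, hmem] using h
    rw [hω] at hmz
    exact hz hmz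
  obtain ⟨d, c, h1, h2, h3, h4⟩ := west_decomposition hI ha
  exact ⟨d, c, h1, (hmem d).1 h2, h3, h4⟩
end
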